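/- arXiv:2509.11751 — 7 statements merged into one kernel-verified Lean document; each statement's English description precedes it below -/
import Mathlib

section
/- Let n, d ≥ 1, let W ∈ ℝ^{n×d} have rows w_1ᵀ, …, w_nᵀ, let V₀ ∈ ℝ^{d×d} be symmetric positive definite, and let θ̂ ∈ ℝ^d. Set V = (WᵀW + V₀^{-1})^{-1} and let q_θ be the pdf of the d-variate Gaussian N(θ̂, V). For each i ∈ {1, …, n} fix y_i ∈ {0,1}, set μ_i = w_iᵀθ̂, and let q_i be the pdf of the N(μ_i, 1) distribution truncated to (0, ∞) if y_i = 1 and to (−∞, 0] if y_i = 0; let ẑ_i be the mean of q_i and ẑ = (ẑ_1, …, ẑ_n). Then the ELBO coincides with the log variational Bayes criterion evaluated at (ẑ, θ̂): ∫_{ℝ^d} ∫_{ℝ^n} q_θ(θ) ∏_{i=1}^n q_i(z_i) · [ log N_n(z; Wθ, I_n) + log N_d(θ; 0, V₀) − log q_θ(θ) − Σ_{i=1}^n log q_i(z_i) ] dz dθ = log N_n(ẑ; Wθ̂, I_n) + log N_d(θ̂; 0, V₀) − log q_θ(θ̂) − Σ_{i=1}^n log q_i(ẑ_i). -/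
open MeasureTheory Matrix Real

/-- pdf of the `k`-variate Gaussian with mean `m` and covariance `S`. -/
noncomputable def gaussPdf {k : ℕ} (m : Fin k → ℝ) (S : Matrix (Fin k) (Fin k) ℝ)
    (x : Fin k → ℝ) : ℝ :=
  (2 * Real.pi) ^ (-(k : ℝ) / 2) * S.det ^ (-(1 : ℝ) / 2) *
    Real.exp (-(1 / 2) * ((x - m) ⬝ᵥ (S⁻¹ *ᵥ (x - m))))

/-- standard normal density. -/
noncomputable def stdPdf (t : ℝ) : ℝ :=
  (2 * Real.pi) ^ (-(1 : ℝ) / 2) * Real.exp (-t ^ 2 / 2)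

/-- pdf of `N(μ, 1)` truncated to the set `S`. -/
noncomputable def truncPdf (μ : ℝ) (S : Set ℝ) (z : ℝ) : ℝ :=
  S.indicator (fun t => stdPdf (t - μ)) z / ∫ t in S, stdPdf (t - μ)

open ProbabilityTheory

/-!
On the support of the variational density the quadratic terms of the log criterion cancel: the
fixed-point precision `V⁻¹ = WᵀW + V₀⁻¹` removes the term quadratic in `θ`, and the unit variance of
the truncated factors removes the term quadratic in `z`. What is left is affine in `z` for fixed `θ`
and affine in `θ` for fixed `z`. Integrating an affine function against a probability density
evaluates it at the mean, so the inner integral replaces `z` by `ẑ` and the outer one `θ` by `θ̂`.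
-/

section AffineIntegrals

variable {ι : Type*} [Fintype ι]

/-- The function `g` agrees on the set `s` of coordinate vectors with an affine function, written as
a constant plus a dot product so that it can be integrated coordinate by coordinate. -/
def IsAffineOn (g : (ι → ℝ) → ℝ) (s : Set (ι → ℝ)) : Prop :=
  ∃ (c : ℝ) (a : ι → ℝ), ∀ x ∈ s, g x = c + a ⬝ᵥ x

lemma mul_prod_apply_eq_prod_update {R : Type*} [CommMonoid R] [DecidableEq ι]
    (f : ι → R → R) (x : ι → R) (j : ι) :
    x j * ∏ i, f i (x i) = ∏ i, Function.update f j (fun t => t * f j t) i (x i) := by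
  rw [← Finset.mul_prod_erase _ _ (Finset.mem_univ j),
    ← Finset.mul_prod_erase _ _ (Finset.mem_univ j), Function.update_self, mul_assoc]
  congr 2
  refine Finset.prod_congr rfl fun i hi => ?_
  rw [Function.update_of_ne (Finset.ne_of_mem_erase hi)]

section Product

variable {f : ι → ℝ → ℝ}

lemma integrable_coord_mul_prod (hf : ∀ i, Integrable (f i))
    (hf_mul : ∀ i, Integrable fun t => t * f i t) (j : ι) :
    Integrable fun x : ι → ℝ => x j * ∏ i, f i (x i) := by
  classical
  simp_rw [mul_prod_apply_eq_prod_update]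
  refine Integrable.fintype_prod fun i => ?_
  obtain rfl | hij := eq_or_ne i j
  · simpa using hf_mul i
  · simpa [hij] using hf i

lemma integral_coord_mul_prod (hf_one : ∀ i, ∫ t, f i t = 1) (j : ι) :
    ∫ x : ι → ℝ, x j * ∏ i, f i (x i) = ∫ t, t * f j t := by
  classical
  simp_rw [mul_prod_apply_eq_prod_update]
  rw [integral_fintype_prod_volume_eq_prod, Finset.prod_eq_single j]
  · simp
  · intro i _ hij
    simpa [hij] using hf_one i
  · simp

lemma integral_prod_mul_affine (hf : ∀ i, Integrable (f i)) (hf_one : ∀ i, ∫ t, f i t = 1)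
    (hf_mul : ∀ i, Integrable fun t => t * f i t) (c : ℝ) (a : ι → ℝ) :
    ∫ x : ι → ℝ, (∏ i, f i (x i)) * (c + a ⬝ᵥ x) = c + a ⬝ᵥ fun i => ∫ t, t * f i t := by
  have integrable_prod : Integrable fun x : ι → ℝ => ∏ i, f i (x i) := Integrable.fintype_prod hf
  have expand (x : ι → ℝ) : (∏ i, f i (x i)) * (c + a ⬝ᵥ x) =
      c * ∏ i, f i (x i) + ∑ j, a j * (x j * ∏ i, f i (x i)) := by
    rw [mul_add, dotProduct, Finset.mul_sum, mul_comm c]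
    exact congrArg _ (Finset.sum_congr rfl fun j _ => by ring)
  have integrable_term (j : ι) : Integrable fun x : ι → ℝ => a j * (x j * ∏ i, f i (x i)) :=
    (integrable_coord_mul_prod hf hf_mul j).const_mul _
  simp_rw [expand]
  rw [integral_add (integrable_prod.const_mul c)
      (integrable_finsetSum _ fun j _ => integrable_term j),
    integral_finsetSum _ fun j _ => integrable_term j]
  simp_rw [integral_const_mul, integral_coord_mul_prod hf_one]
  rw [integral_fintype_prod_volume_eq_prod]
  simp [hf_one, dotProduct]

lemma integral_prod_mul_of_isAffineOn {S : ι → Set ℝ} {g : (ι → ℝ) → ℝ}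
    (hf : ∀ i, Integrable (f i)) (hf_one : ∀ i, ∫ t, f i t = 1)
    (hf_mul : ∀ i, Integrable fun t => t * f i t) (hf_zero : ∀ i, ∀ t ∉ S i, f i t = 0)
    (hf_mean : ∀ i, ∫ t, t * f i t ∈ S i) (hg : IsAffineOn g (Set.univ.pi S)) :
    ∫ x : ι → ℝ, (∏ i, f i (x i)) * g x = g fun i => ∫ t, t * f i t := by
  obtain ⟨c, a, hg⟩ := hg
  rw [hg _ fun i _ => hf_mean i, ← integral_prod_mul_affine hf hf_one hf_mul]
  refine integral_congr_ae (ae_of_all _ fun x => ?_)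
  by_cases hx : x ∈ Set.univ.pi S
  · simp only [hg x hx]
  · obtain ⟨i, hi⟩ : ∃ i, x i ∉ S i := by simpa using hx
    have hprod : ∏ i, f i (x i) = 0 := Finset.prod_eq_zero (Finset.mem_univ i) (hf_zero i _ hi)
    simp only [hprod, zero_mul]

end Product

end AffineIntegrals

section LinearAlgebra

lemma dotProduct_mulVec_comm {ι R : Type*} [Fintype ι] [CommSemiring R] {A : Matrix ι ι R}
    (hA : A.IsSymm) (x y : ι → R) : x ⬝ᵥ (A *ᵥ y) = y ⬝ᵥ (A *ᵥ x) := by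
  rw [dotProduct_comm, dotProduct_mulVec, ← mulVec_transpose, hA.eq]

variable {ι : Type*} [Fintype ι] [DecidableEq ι]

lemma det_rpow_neg_half_of_inv_eq {V B : Matrix ι ι ℝ} (hB : V⁻¹ = Bᵀ * B) :
    V.det ^ (-(1 : ℝ) / 2) = |B.det| := by
  have hdet : V.det = (B.det ^ 2)⁻¹ := by
    rw [eq_comm, inv_eq_iff_eq_inv, ← Ring.inverse_eq_inv', ← det_nonsing_inv, hB, det_mul,
      det_transpose, sq]
  rw [hdet, neg_div, rpow_neg (by positivity), ← sqrt_eq_rpow, sqrt_inv, inv_inv, sqrt_sq_eq_abs]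

lemma exists_inv_eq_transpose_mul_self {V : Matrix ι ι ℝ} (hV : V.PosDef) :
    ∃ B : Matrix ι ι ℝ, B.det ≠ 0 ∧ V⁻¹ = Bᵀ * B := by
  obtain ⟨B, hB⟩ : ∃ B : Matrix ι ι ℝ, V⁻¹ = Bᵀ * B := by
    open scoped MatrixOrder in
    simpa [star_eq_conjTranspose] using
      CStarAlgebra.nonneg_iff_eq_star_mul_self.1 hV.inv.posSemidef.nonneg
  refine ⟨B, fun h => hV.inv.det_pos.ne' ?_, hB⟩
  rw [hB, det_mul, h, mul_zero]

lemma integral_comp_mulVec {E : Type*} [NormedAddCommGroup E] [NormedSpace ℝ E]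
    {B : Matrix ι ι ℝ} (hB : B.det ≠ 0) (g : (ι → ℝ) → E) :
    ∫ x, g (B *ᵥ x) = |B.det|⁻¹ • ∫ x, g x := by
  have hemb : MeasurableEmbedding (toLin' B) :=
    (LinearMap.continuous_of_finiteDimensional _).measurableEmbedding
      (mulVec_injective_of_isUnit ((isUnit_iff_isUnit_det B).2 hB.isUnit))
  have hmap := hemb.integral_map (μ := volume) g
  rw [Real.map_matrix_volume_pi_eq_smul_volume_pi hB, integral_smul_measure,
    ENNReal.toReal_ofReal (abs_nonneg _), abs_inv] at hmap
  simpa using hmap.symm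

end LinearAlgebra

section StdPdf

lemma stdPdf_pos (t : ℝ) : 0 < stdPdf t := by
  unfold stdPdf
  positivity

lemma log_stdPdf (t : ℝ) : log (stdPdf t) = log ((2 * π) ^ (-(1 : ℝ) / 2)) - t ^ 2 / 2 := by
  rw [stdPdf, log_mul (by positivity) (exp_ne_zero _), log_exp]
  ring

lemma stdPdf_sub_eq_gaussianPDFReal (μ t : ℝ) : stdPdf (t - μ) = gaussianPDFReal μ 1 t := by
  rw [stdPdf, gaussianPDFReal, neg_div, rpow_neg (by positivity), ← sqrt_eq_rpow]
  simp

lemma integrable_mul_stdPdf_sub {μ : ℝ} {g : ℝ → ℝ} (hg : Integrable g (gaussianReal μ 1)) :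
    Integrable fun t => g t * stdPdf (t - μ) := by
  rw [gaussianReal_of_var_ne_zero μ one_ne_zero, integrable_withDensity_iff
    (measurable_gaussianPDF μ 1) (ae_of_all _ fun _ => gaussianPDF_lt_top)] at hg
  simpa [toReal_gaussianPDF, stdPdf_sub_eq_gaussianPDFReal] using hg

lemma integral_mul_stdPdf_sub (μ : ℝ) (g : ℝ → ℝ) :
    ∫ t, g t * stdPdf (t - μ) = ∫ t, g t ∂gaussianReal μ 1 := by
  simp [integral_gaussianReal_eq_integral_smul, stdPdf_sub_eq_gaussianPDFReal, mul_comm]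

lemma setIntegral_stdPdf_sub (μ : ℝ) (S : Set ℝ) :
    ∫ t in S, stdPdf (t - μ) = (gaussianReal μ 1).real S := by
  simp_rw [stdPdf_sub_eq_gaussianPDFReal]
  rw [measureReal_def, gaussianReal_apply_eq_integral _ one_ne_zero,
    ENNReal.toReal_ofReal (integral_nonneg fun _ => gaussianPDFReal_nonneg _ _ _)]

lemma integrable_id_gaussianReal (μ : ℝ) (v : NNReal) :
    Integrable (fun t => t) (gaussianReal μ v) :=
  memLp_one_iff_integrable.1 (memLp_id_gaussianReal 1)

end StdPdf

section TruncPdf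

lemma setAverage_id_mem_of_ordConnected {ν : Measure ℝ} {S : Set ℝ} (hS : S.OrdConnected)
    (hS₀ : ν S ≠ 0) (hS_top : ν S ≠ ⊤) (hint : IntegrableOn (fun t => t) S ν) :
    ⨍ t in S, t ∂ν ∈ S := by
  obtain ⟨x, hx, hx_le⟩ := exists_le_setAverage hS₀ hS_top hint
  obtain ⟨y, hy, hle_y⟩ := exists_setAverage_le hS₀ hS_top hint
  exact hS.out hx hy ⟨hx_le, hle_y⟩

variable {μ : ℝ} {S : Set ℝ}

lemma gaussianReal_apply_ne_zero {v : NNReal} (hv : v ≠ 0) (hS : volume S ≠ 0) :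
    gaussianReal μ v S ≠ 0 :=
  fun h => hS (gaussianReal_absolutelyContinuous' μ hv h)

lemma truncPdf_of_notMem {z : ℝ} (hz : z ∉ S) : truncPdf μ S z = 0 := by
  simp [truncPdf, hz]

lemma mul_truncPdf (g : ℝ → ℝ) (z : ℝ) : g z * truncPdf μ S z =
    S.indicator g z * stdPdf (z - μ) / (gaussianReal μ 1).real S := by
  by_cases hz : z ∈ S <;> simp [truncPdf, setIntegral_stdPdf_sub, hz, mul_div_assoc]

lemma integrable_mul_truncPdf (hS : MeasurableSet S) {g : ℝ → ℝ}
    (hg : Integrable g (gaussianReal μ 1)) : Integrable fun z => g z * truncPdf μ S z := by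
  simp_rw [mul_truncPdf]
  exact (integrable_mul_stdPdf_sub (hg.indicator hS)).div_const _

lemma integral_mul_truncPdf (hS : MeasurableSet S) (g : ℝ → ℝ) :
    ∫ z, g z * truncPdf μ S z = ⨍ z in S, g z ∂gaussianReal μ 1 := by
  simp_rw [mul_truncPdf]
  rw [integral_div, integral_mul_stdPdf_sub, integral_indicator hS, setAverage_eq, smul_eq_mul,
    div_eq_inv_mul]

lemma integral_truncPdf (hS : MeasurableSet S) (hS₀ : volume S ≠ 0) :
    ∫ z, truncPdf μ S z = 1 := by
  simpa [setAverage_const (gaussianReal_apply_ne_zero one_ne_zero hS₀)] using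
    integral_mul_truncPdf (μ := μ) hS fun _ => 1

lemma integral_id_mul_truncPdf_mem (hS : S.OrdConnected) (hS₀ : volume S ≠ 0) :
    ∫ z, z * truncPdf μ S z ∈ S := by
  rw [integral_mul_truncPdf hS.measurableSet fun z => z]
  exact setAverage_id_mem_of_ordConnected hS (gaussianReal_apply_ne_zero one_ne_zero hS₀)
    (measure_ne_top _ _) (integrable_id_gaussianReal μ 1).integrableOn

lemma log_truncPdf (hS₀ : volume S ≠ 0) {z : ℝ} (hz : z ∈ S) : log (truncPdf μ S z) =
    log ((2 * π) ^ (-(1 : ℝ) / 2)) - (z - μ) ^ 2 / 2 - log ((gaussianReal μ 1).real S) := by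
  have hmass : (gaussianReal μ 1).real S ≠ 0 :=
    (measureReal_ne_zero_iff (measure_ne_top _ _)).2 (gaussianReal_apply_ne_zero one_ne_zero hS₀)
  rw [truncPdf, Set.indicator_of_mem hz, setIntegral_stdPdf_sub, log_div (stdPdf_pos _).ne' hmass,
    log_stdPdf]

section Product

variable {ι : Type*} [Fintype ι] {μ : ι → ℝ} {S : ι → Set ℝ}

lemma sum_log_truncPdf_sub (hS₀ : ∀ i, volume (S i) ≠ 0) {z z' : ι → ℝ}
    (hz : z ∈ Set.univ.pi S) (hz' : z' ∈ Set.univ.pi S) :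
    ∑ i, log (truncPdf (μ i) (S i) (z i)) - ∑ i, log (truncPdf (μ i) (S i) (z' i)) =
      ((z' - μ) ⬝ᵥ (z' - μ) - (z - μ) ⬝ᵥ (z - μ)) / 2 := by
  simp only [dotProduct, ← Finset.sum_sub_distrib, Finset.sum_div]
  refine Finset.sum_congr rfl fun i _ => ?_
  rw [log_truncPdf (hS₀ i) (hz i trivial), log_truncPdf (hS₀ i) (hz' i trivial), Pi.sub_apply,
    Pi.sub_apply]
  ring

lemma integral_prod_truncPdf_mul_of_isAffineOn (hS : ∀ i, (S i).OrdConnected)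
    (hS₀ : ∀ i, volume (S i) ≠ 0) {g : (ι → ℝ) → ℝ} (hg : IsAffineOn g (Set.univ.pi S)) :
    ∫ z : ι → ℝ, (∏ i, truncPdf (μ i) (S i) (z i)) * g z =
      g fun i => ∫ z, z * truncPdf (μ i) (S i) z :=
  integral_prod_mul_of_isAffineOn
    (fun i => by
      simpa using integrable_mul_truncPdf (μ := μ i) (hS i).measurableSet (integrable_const 1))
    (fun i => integral_truncPdf (hS i).measurableSet (hS₀ i))
    (fun i => integrable_mul_truncPdf (hS i).measurableSet (integrable_id_gaussianReal _ _))
    (fun _ _ => truncPdf_of_notMem)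
    (fun i => integral_id_mul_truncPdf_mem (hS i) (hS₀ i)) hg

end Product

end TruncPdf

section GaussPdf

variable {k : ℕ} {m : Fin k → ℝ} {V : Matrix (Fin k) (Fin k) ℝ}

lemma log_gaussPdf_sub (hV : V.PosDef) (m m' x x' : Fin k → ℝ) :
    log (gaussPdf m V x) - log (gaussPdf m' V x') =
      ((x' - m') ⬝ᵥ (V⁻¹ *ᵥ (x' - m')) - (x - m) ⬝ᵥ (V⁻¹ *ᵥ (x - m))) / 2 := by
  have hnorm : (2 * π) ^ (-(k : ℝ) / 2) * V.det ^ (-(1 : ℝ) / 2) ≠ 0 :=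
    (mul_pos (by positivity) (rpow_pos_of_pos hV.det_pos _)).ne'
  rw [gaussPdf, gaussPdf, log_mul hnorm (exp_ne_zero _), log_mul hnorm (exp_ne_zero _), log_exp,
    log_exp]
  ring

lemma gaussPdf_eq_abs_det_mul_prod_stdPdf {B : Matrix (Fin k) (Fin k) ℝ} (hB : V⁻¹ = Bᵀ * B)
    (x : Fin k → ℝ) : gaussPdf m V x = |B.det| * ∏ i, stdPdf ((B *ᵥ (x - m)) i) := by
  have hquad : (x - m) ⬝ᵥ (V⁻¹ *ᵥ (x - m)) = ∑ i, (B *ᵥ (x - m)) i ^ 2 := by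
    rw [hB, ← mulVec_mulVec, dotProduct_mulVec, vecMul_transpose, dotProduct]
    simp only [sq]
  have hconst : ((2 * π) ^ (-(1 : ℝ) / 2)) ^ k = (2 * π) ^ (-(k : ℝ) / 2) := by
    rw [← rpow_natCast, ← rpow_mul (by positivity)]
    ring_nf
  simp only [gaussPdf, stdPdf, hquad, det_rpow_neg_half_of_inv_eq hB, Finset.prod_mul_distrib,
    Finset.prod_const, Finset.card_univ, Fintype.card_fin, hconst, ← exp_sum, Finset.mul_sum]
  rw [mul_comm ((2 * π) ^ (-(k : ℝ) / 2)), mul_assoc]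
  congr 4 with i
  ring

lemma integral_prod_stdPdf_mul_affine {ι : Type*} [Fintype ι] (c : ℝ) (a : ι → ℝ) :
    ∫ u : ι → ℝ, (∏ i, stdPdf (u i)) * (c + a ⬝ᵥ u) = c := by
  have hone : Integrable stdPdf := by
    simpa using integrable_mul_stdPdf_sub (μ := 0) (integrable_const 1)
  have hid : Integrable fun t => t * stdPdf t := by
    simpa using integrable_mul_stdPdf_sub (integrable_id_gaussianReal 0 1)
  have hint_one : ∫ t, stdPdf t = 1 := by simpa using integral_mul_stdPdf_sub 0 fun _ => 1
  have hint_id : ∫ t, t * stdPdf t = 0 := by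
    simpa [integral_id_gaussianReal] using integral_mul_stdPdf_sub 0 fun t => t
  rw [integral_prod_mul_affine (fun _ => hone) (fun _ => hint_one) fun _ => hid]
  simp [hint_id, dotProduct]

lemma integral_gaussPdf_mul_of_isAffineOn (hV : V.PosDef) {g : (Fin k → ℝ) → ℝ}
    (hg : IsAffineOn g Set.univ) : ∫ x, gaussPdf m V x * g x = g m := by
  obtain ⟨c, a, hg⟩ := hg
  obtain ⟨B, hB₀, hB⟩ := exists_inv_eq_transpose_mul_self hV
  let h (u : Fin k → ℝ) : ℝ := (∏ i, stdPdf (u i)) * (g m + (a ᵥ* B⁻¹) ⬝ᵥ u)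
  have hstandardize (x : Fin k → ℝ) : gaussPdf m V x * g x = |B.det| * h (B *ᵥ (x - m)) := by
    have hdot : (a ᵥ* B⁻¹) ⬝ᵥ (B *ᵥ (x - m)) = a ⬝ᵥ (x - m) := by
      rw [dotProduct_mulVec, vecMul_vecMul, nonsing_inv_mul _ hB₀.isUnit, vecMul_one]
    rw [gaussPdf_eq_abs_det_mul_prod_stdPdf hB, mul_assoc, hg x trivial]
    simp only [h, hdot, hg m trivial, dotProduct_sub]
    ring
  calc ∫ x, gaussPdf m V x * g x
      = |B.det| * ∫ x, h (B *ᵥ (x - m)) := by simp_rw [hstandardize, integral_const_mul]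
    _ = |B.det| * ∫ x, h (B *ᵥ x) := by rw [integral_sub_right_eq_self fun x => h (B *ᵥ x)]
    _ = ∫ u, h u := by
      rw [integral_comp_mulVec hB₀, smul_eq_mul, mul_inv_cancel_left₀ (abs_ne_zero.2 hB₀)]
    _ = g m := integral_prod_stdPdf_mul_affine _ _

end GaussPdf

section Probit

variable {n d : ℕ}

/-- The log variational Bayes criterion of the probit model at latent utilities `z` and regression
parameters `θ`, for the variational factors `qθ` and `q`. Its expectation under `qθ` and `q` is the
evidence lower bound. -/
noncomputable def logVBC (W : Matrix (Fin n) (Fin d) ℝ) (V₀ : Matrix (Fin d) (Fin d) ℝ)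
    (qθ : (Fin d → ℝ) → ℝ) (q : Fin n → ℝ → ℝ) (z : Fin n → ℝ) (θ : Fin d → ℝ) : ℝ :=
  log (gaussPdf (W *ᵥ θ) (1 : Matrix (Fin n) (Fin n) ℝ) z) +
    log (gaussPdf (0 : Fin d → ℝ) V₀ θ) - log (qθ θ) - ∑ i, log (q i (z i))

lemma posDef_transpose_mul_self_add_inv {m k : Type*} [Fintype m] [Fintype k] [DecidableEq k]
    (W : Matrix m k ℝ) {V₀ : Matrix k k ℝ} (hV₀ : V₀.PosDef) : (Wᵀ * W + V₀⁻¹).PosDef :=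
  PosDef.posSemidef_add (by simpa using posSemidef_conjTranspose_mul_self W) hV₀.inv

lemma probit_quadratic_cancellation {R m k : Type*} [CommRing R] [Fintype m] [Fintype k]
    (W : Matrix m k R) {P : Matrix k k R} (hP : P.IsSymm) (z : m → R) (θ t : k → R) :
    (z - W *ᵥ θ) ⬝ᵥ (z - W *ᵥ θ) + θ ⬝ᵥ (P *ᵥ θ) -
        (θ - t) ⬝ᵥ ((Wᵀ * W + P) *ᵥ (θ - t)) - (z - W *ᵥ t) ⬝ᵥ (z - W *ᵥ t) =
      t ⬝ᵥ (P *ᵥ t) - 2 * ((z - W *ᵥ t) ⬝ᵥ (W *ᵥ (θ - t)) - t ⬝ᵥ (P *ᵥ (θ - t))) := by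
  obtain ⟨δ, rfl⟩ : ∃ δ, θ = t + δ := ⟨θ - t, by simp⟩
  obtain ⟨r, rfl⟩ : ∃ r, z = W *ᵥ t + r := ⟨z - W *ᵥ t, by simp⟩
  have hresidual : W *ᵥ t + r - W *ᵥ (t + δ) = r - W *ᵥ δ := by
    rw [mulVec_add, add_sub_add_left_eq_sub]
  have hgram : δ ⬝ᵥ ((Wᵀ * W) *ᵥ δ) = (W *ᵥ δ) ⬝ᵥ (W *ᵥ δ) := by
    rw [← mulVec_mulVec, dotProduct_mulVec, vecMul_transpose]
  rw [hresidual, add_sub_cancel_left, add_sub_cancel_left]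
  simp only [add_mulVec, mulVec_add, dotProduct_add, add_dotProduct, dotProduct_sub,
    sub_dotProduct, hgram, dotProduct_mulVec_comm hP δ t, dotProduct_comm (W *ᵥ δ) r]
  ring

variable {W : Matrix (Fin n) (Fin d) ℝ} {V₀ : Matrix (Fin d) (Fin d) ℝ} {θhat : Fin d → ℝ}
  {S : Fin n → Set ℝ} {qθ : (Fin d → ℝ) → ℝ} {q : Fin n → ℝ → ℝ}

lemma logVBC_eq_add (hV₀ : V₀.PosDef) (hS₀ : ∀ i, volume (S i) ≠ 0)
    (hqθ : qθ = gaussPdf θhat (Wᵀ * W + V₀⁻¹)⁻¹)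
    (hq : ∀ i, q i = truncPdf ((W *ᵥ θhat) i) (S i)) {z z' : Fin n → ℝ}
    (hz : z ∈ Set.univ.pi S) (hz' : z' ∈ Set.univ.pi S) (θ : Fin d → ℝ) :
    logVBC W V₀ qθ q z θ = logVBC W V₀ qθ q z' θhat +
      ((z - W *ᵥ θhat) ⬝ᵥ (W *ᵥ (θ - θhat)) - θhat ⬝ᵥ (V₀⁻¹ *ᵥ (θ - θhat))) := by
  have hP := posDef_transpose_mul_self_add_inv W hV₀
  have hlik := log_gaussPdf_sub PosDef.one (W *ᵥ θ) (W *ᵥ θhat) z z'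
  have hprior := log_gaussPdf_sub hV₀ 0 0 θ θhat
  have hparam := log_gaussPdf_sub hP.inv θhat θhat θ θhat
  have hlatent := sum_log_truncPdf_sub (μ := W *ᵥ θhat) hS₀ hz hz'
  have hquad := probit_quadratic_cancellation W (P := V₀⁻¹)
    (by simpa [IsSymm] using hV₀.inv.isHermitian.eq) z θ θhat
  rw [inv_one, one_mulVec, one_mulVec] at hlik
  rw [sub_zero, sub_zero] at hprior
  rw [nonsing_inv_nonsing_inv _ hP.det_pos.ne'.isUnit, sub_self, zero_dotProduct] at hparam
  simp only [logVBC, hqθ, hq]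
  linarith

lemma isAffineOn_logVBC_latent (hV₀ : V₀.PosDef) (hS₀ : ∀ i, volume (S i) ≠ 0)
    (hqθ : qθ = gaussPdf θhat (Wᵀ * W + V₀⁻¹)⁻¹)
    (hq : ∀ i, q i = truncPdf ((W *ᵥ θhat) i) (S i)) (θ : Fin d → ℝ) :
    IsAffineOn (fun z => logVBC W V₀ qθ q z θ) (Set.univ.pi S) := by
  obtain ⟨z', hz'⟩ : (Set.univ.pi S).Nonempty :=
    Set.univ_pi_nonempty_iff.2 fun i => nonempty_of_measure_ne_zero (hS₀ i)
  refine ⟨logVBC W V₀ qθ q z' θhat - (W *ᵥ θhat) ⬝ᵥ (W *ᵥ (θ - θhat)) -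
    θhat ⬝ᵥ (V₀⁻¹ *ᵥ (θ - θhat)), W *ᵥ (θ - θhat), fun z hz => ?_⟩
  beta_reduce
  rw [logVBC_eq_add hV₀ hS₀ hqθ hq hz hz', sub_dotProduct, dotProduct_comm z]
  ring

lemma isAffineOn_logVBC_param (hV₀ : V₀.PosDef) (hS₀ : ∀ i, volume (S i) ≠ 0)
    (hqθ : qθ = gaussPdf θhat (Wᵀ * W + V₀⁻¹)⁻¹)
    (hq : ∀ i, q i = truncPdf ((W *ᵥ θhat) i) (S i)) {z : Fin n → ℝ}
    (hz : z ∈ Set.univ.pi S) : IsAffineOn (logVBC W V₀ qθ q z) Set.univ := by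
  let a : Fin d → ℝ := (z - W *ᵥ θhat) ᵥ* W - θhat ᵥ* V₀⁻¹
  refine ⟨logVBC W V₀ qθ q z θhat - a ⬝ᵥ θhat, a, fun θ _ => ?_⟩
  rw [logVBC_eq_add hV₀ hS₀ hqθ hq hz hz, dotProduct_mulVec, dotProduct_mulVec, ← sub_dotProduct,
    dotProduct_sub]
  ring

theorem probit_elbo_eq_vbc_general (hV₀ : V₀.PosDef) (hS : ∀ i, (S i).OrdConnected)
    (hS₀ : ∀ i, volume (S i) ≠ 0) (hqθ : qθ = gaussPdf θhat (Wᵀ * W + V₀⁻¹)⁻¹)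
    (hq : ∀ i, q i = truncPdf ((W *ᵥ θhat) i) (S i)) {zhat : Fin n → ℝ}
    (hzhat : ∀ i, zhat i = ∫ z, z * q i z) :
    (∫ θ, ∫ z : Fin n → ℝ, qθ θ * (∏ i, q i (z i)) * logVBC W V₀ qθ q z θ) =
      logVBC W V₀ qθ q zhat θhat := by
  have hzhat_mem : zhat ∈ Set.univ.pi S := fun i _ => by
    rw [hzhat, hq]
    exact integral_id_mul_truncPdf_mem (hS i) (hS₀ i)
  have latent (θ : Fin d → ℝ) : ∫ z : Fin n → ℝ, (∏ i, q i (z i)) * logVBC W V₀ qθ q z θ =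
      logVBC W V₀ qθ q zhat θ := by
    rw [funext hzhat]
    simpa only [← hq] using integral_prod_truncPdf_mul_of_isAffineOn (μ := W *ᵥ θhat) hS hS₀
      (isAffineOn_logVBC_latent hV₀ hS₀ hqθ hq θ)
  have param : ∫ θ, qθ θ * logVBC W V₀ qθ q zhat θ = logVBC W V₀ qθ q zhat θhat := by
    simpa only [← hqθ] using
      integral_gaussPdf_mul_of_isAffineOn (m := θhat) (posDef_transpose_mul_self_add_inv W hV₀).inv
        (isAffineOn_logVBC_param hV₀ hS₀ hqθ hq hzhat_mem)
  simp_rw [mul_assoc, integral_const_mul, latent, param]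

end Probit

/-- For the probit model, the ELBO coincides with the log variational Bayes
criterion evaluated at `(ẑ, θ̂)`. -/
theorem probit_elbo_eq_vbc (n d : ℕ) (hn : 1 ≤ n) (hd : 1 ≤ d)
    (W : Matrix (Fin n) (Fin d) ℝ) (V₀ : Matrix (Fin d) (Fin d) ℝ)
    (hV₀ : V₀.PosDef) (θhat : Fin d → ℝ)
    (y : Fin n → ℕ) (hy : ∀ i, y i = 0 ∨ y i = 1)
    (V : Matrix (Fin d) (Fin d) ℝ) (hV : V = (Wᵀ * W + V₀⁻¹)⁻¹)
    (qθ : (Fin d → ℝ) → ℝ) (hqθ : qθ = gaussPdf θhat V)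
    (μ : Fin n → ℝ) (hμ : μ = W *ᵥ θhat)
    (S : Fin n → Set ℝ)
    (hS : ∀ i, S i = if y i = 1 then Set.Ioi (0 : ℝ) else Set.Iic (0 : ℝ))
    (q : Fin n → ℝ → ℝ) (hq : ∀ i, q i = truncPdf (μ i) (S i))
    (zhat : Fin n → ℝ) (hzhat : ∀ i, zhat i = ∫ z, z * q i z) :
    (∫ θ : Fin d → ℝ, ∫ z : Fin n → ℝ,
        qθ θ * (∏ i, q i (z i)) *
          (Real.log (gaussPdf (W *ᵥ θ) (1 : Matrix (Fin n) (Fin n) ℝ) z) +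
            Real.log (gaussPdf (0 : Fin d → ℝ) V₀ θ) - Real.log (qθ θ) -
            ∑ i, Real.log (q i (z i)))) =
      Real.log (gaussPdf (W *ᵥ θhat) (1 : Matrix (Fin n) (Fin n) ℝ) zhat) +
        Real.log (gaussPdf (0 : Fin d → ℝ) V₀ θhat) - Real.log (qθ θhat) -
        ∑ i, Real.log (q i (zhat i)) :=
  probit_elbo_eq_vbc_general hV₀ (fun i => by rw [hS i]; split_ifs <;> infer_instance)
    (fun i => by rw [hS i]; split_ifs <;> simp) (hqθ.trans (by rw [hV])) (hμ ▸ hq) hzhat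
end

section
/- Let L*, L̄ : ℝ → ℝ be twice continuously differentiable and strictly concave, attaining their maxima at unique points β_VB = argmax L* and β_AVB = argmax L̄, respectively. Define the gap D := L* − L̄ and assume D is nonnegative, convex, D(0) = 0, and 0 is the unique global minimizer of D. Then sign(β_AVB) = sign(β_VB) and |β_AVB| ≤ |β_VB|, with equality |β_AVB| = |β_VB| if and only if β_VB = 0. -/
/-!
A concave function lies below its tangent at `a`, so its derivative at `a` has the sign of `m - a`,
where `m` is its unique maximizer. The gap `Lstar - Lbar` is stationary at `0`, hence `Lstar` and
`Lbar` have the same derivative there and their maximizers have the same sign. At `βVB`, where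
`Lstar` is stationary, `Lbar` has the same derivative as the concave function `Lbar - Lstar`, which
is maximal at `0`; hence `βAVB - βVB` has the sign of `0 - βVB`.
-/

theorem sign_deriv_eq_sign_sub_of_concaveOn {s : Set ℝ} {f : ℝ → ℝ} {a m : ℝ}
    (hf : ConcaveOn ℝ s f) (hs : s ∈ nhds a) (hd : DifferentiableAt ℝ f a) (hm : m ∈ s)
    (hmax : ∀ x ∈ s, x ≠ m → f x < f m) :
    Real.sign (deriv f a) = Real.sign (m - a) := by
  have ha : a ∈ s := mem_of_mem_nhds hs
  rcases lt_trichotomy a m with ham | rfl | hma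
  · have hslope : 0 < slope f a m := by
      rw [slope_def_field]
      exact div_pos (sub_pos.2 (hmax a ha ham.ne)) (sub_pos.2 ham)
    have hderiv : 0 < deriv f a := hslope.trans_le (hf.slope_le_deriv ha hm ham hd)
    rw [Real.sign_of_pos hderiv, Real.sign_of_pos (sub_pos.2 ham)]
  · have hlocal : IsLocalMax f a := Filter.mem_of_superset hs fun x hx =>
      (eq_or_ne x a).elim (fun h => (congrArg f h).le) fun h => (hmax x hx h).le
    rw [hlocal.deriv_eq_zero, sub_self]
  · have hslope : slope f m a < 0 := by
      rw [slope_def_field]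
      exact div_neg_of_neg_of_pos (sub_neg.2 (hmax a ha hma.ne')) (sub_pos.2 hma)
    have hderiv : deriv f a < 0 := (hf.deriv_le_slope hm ha hma hd).trans_lt hslope
    rw [Real.sign_of_neg hderiv, Real.sign_of_neg (sub_neg.2 hma)]

theorem pos_of_sign_eq {x y : ℝ} (h : Real.sign x = Real.sign y) (hy : 0 < y) : 0 < x := by
  rcases lt_trichotomy x 0 with hx | rfl | hx
  · norm_num [Real.sign_of_neg hx, Real.sign_of_pos hy] at h
  · norm_num [Real.sign_of_pos hy] at h
  · exact hx

theorem neg_of_sign_eq {x y : ℝ} (h : Real.sign x = Real.sign y) (hy : y < 0) : x < 0 := by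
  refine neg_pos.1 (pos_of_sign_eq (y := -y) ?_ (neg_pos.2 hy))
  rw [Real.sign_neg, Real.sign_neg, h]

theorem abs_le_and_abs_eq_iff_of_sign_eq {x y : ℝ} (hsign : Real.sign x = Real.sign y)
    (hsub : Real.sign (x - y) = Real.sign (0 - y)) :
    |x| ≤ |y| ∧ (|x| = |y| ↔ y = 0) := by
  rcases lt_trichotomy y 0 with hy | rfl | hy
  · have hx : x < 0 := neg_of_sign_eq hsign hy
    have hyx : 0 < x - y := pos_of_sign_eq hsub (sub_pos.2 hy)
    have habs : |x| < |y| := by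
      rw [abs_of_neg hx, abs_of_neg hy]
      exact neg_lt_neg (sub_pos.1 hyx)
    exact ⟨habs.le, iff_of_false habs.ne hy.ne⟩
  · have hx : x = 0 := by simpa only [Real.sign_zero, Real.sign_eq_zero_iff] using hsign
    simp [hx]
  · have hx : 0 < x := pos_of_sign_eq hsign hy
    have hxy : x - y < 0 := neg_of_sign_eq hsub (sub_neg.2 hy)
    have habs : |x| < |y| := by
      rw [abs_of_pos hx, abs_of_pos hy]
      exact sub_neg.1 hxy
    exact ⟨habs.le, iff_of_false habs.ne hy.ne'⟩

theorem avb_shrinks_vb_univariate_general {Lstar Lbar : ℝ → ℝ}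
    (hLstar : Differentiable ℝ Lstar) (hLbar : Differentiable ℝ Lbar)
    (hconc : ConcaveOn ℝ Set.univ Lstar) (hgap : ConvexOn ℝ Set.univ (Lstar - Lbar))
    {βVB βAVB : ℝ}
    (hVB : ∀ x, x ≠ βVB → Lstar x < Lstar βVB)
    (hAVB : ∀ x, x ≠ βAVB → Lbar x < Lbar βAVB)
    (hmin : ∀ x, x ≠ 0 → (Lstar - Lbar) 0 < (Lstar - Lbar) x) :
    Real.sign βAVB = Real.sign βVB ∧ |βAVB| ≤ |βVB| ∧
      (|βAVB| = |βVB| ↔ βVB = 0) := by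
  have hnegGap : ConcaveOn ℝ Set.univ (Lbar - Lstar) := by simpa only [neg_sub] using hgap.neg
  have hconcBar : ConcaveOn ℝ Set.univ Lbar := by
    simpa only [sub_sub_cancel] using hconc.sub hgap
  have hstar (a : ℝ) : Real.sign (deriv Lstar a) = Real.sign (βVB - a) :=
    sign_deriv_eq_sign_sub_of_concaveOn hconc Filter.univ_mem (hLstar a) trivial fun x _ => hVB x
  have hbar (a : ℝ) : Real.sign (deriv Lbar a) = Real.sign (βAVB - a) :=
    sign_deriv_eq_sign_sub_of_concaveOn hconcBar Filter.univ_mem (hLbar a) trivial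
      fun x _ => hAVB x
  have hdiff (a : ℝ) : Real.sign (deriv Lbar a - deriv Lstar a) = Real.sign (0 - a) := by
    rw [← deriv_sub (hLbar a) (hLstar a)]
    refine sign_deriv_eq_sign_sub_of_concaveOn hnegGap Filter.univ_mem
      ((hLbar a).sub (hLstar a)) trivial fun x _ hx => ?_
    simpa only [Pi.sub_apply, neg_sub] using neg_lt_neg (hmin x hx)
  have hzero : deriv Lbar 0 = deriv Lstar 0 := by
    simpa only [sub_self, Real.sign_zero, Real.sign_eq_zero_iff, sub_eq_zero] using hdiff 0
  have hstationary : deriv Lstar βVB = 0 := by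
    simpa only [sub_self, Real.sign_zero, Real.sign_eq_zero_iff] using hstar βVB
  have hsign : Real.sign βAVB = Real.sign βVB := by
    rw [← sub_zero βAVB, ← hbar, hzero, hstar, sub_zero]
  have hsub : Real.sign (βAVB - βVB) = Real.sign (0 - βVB) := by
    rw [← hbar, ← hdiff, hstationary, sub_zero]
  exact ⟨hsign, abs_le_and_abs_eq_iff_of_sign_eq hsign hsub⟩

/-- Univariate AVB shrinkage: if `Lstar` and `Lbar` are twice continuously
differentiable, strictly concave, with unique maximizers `βVB` and `βAVB`, and the
gap `D = Lstar - Lbar` is nonnegative, convex, vanishes at `0` and has `0` as its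
unique global minimizer, then `βAVB` has the same sign as `βVB` and is no larger
in absolute value, with equality iff `βVB = 0`. -/
theorem avb_shrinks_vb_univariate (Lstar Lbar : ℝ → ℝ)
    (hLstar : ContDiff ℝ 2 Lstar) (hLbar : ContDiff ℝ 2 Lbar)
    (hconcS : StrictConcaveOn ℝ Set.univ Lstar)
    (hconcB : StrictConcaveOn ℝ Set.univ Lbar)
    (βVB βAVB : ℝ)
    (hVB : ∀ x, x ≠ βVB → Lstar x < Lstar βVB)
    (hAVB : ∀ x, x ≠ βAVB → Lbar x < Lbar βAVB)
    (D : ℝ → ℝ) (hD : D = Lstar - Lbar)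
    (hDnonneg : ∀ x, 0 ≤ D x) (hDconv : ConvexOn ℝ Set.univ D)
    (hD0 : D 0 = 0) (hDmin : ∀ x, x ≠ 0 → D 0 < D x) :
    Real.sign βAVB = Real.sign βVB ∧ |βAVB| ≤ |βVB| ∧
      (|βAVB| = |βVB| ↔ βVB = 0) := by
  subst hD
  exact avb_shrinks_vb_univariate_general (hLstar.differentiable two_ne_zero)
    (hLbar.differentiable two_ne_zero) hconcS.concaveOn hDconv hVB hAVB hDmin
end

section
/- Let σ > 0 and let L : ℝ → (0, ∞) be twice continuously differentiable and log-concave (i.e., (log L)″ ≤ 0 everywhere) with ∫_ℝ (1 + z²) φ_σ(z − η) L(z) dz < ∞, where φ_σ(t) = (2πσ²)^{−1/2} e^{−t²/(2σ²)}. Let π_η be the probability measure on ℝ with density proportional to z ↦ φ_σ(z − η) L(z). Then the variance of π_η satisfies 0 < Var(π_η) ≤ σ². Consequently the posterior mean m(η) = ∫ z dπ_η(z) satisfies m′(η) = Var(π_η)/σ² ∈ (0, 1]. -/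
open MeasureTheory Real

/-- density of the `N(0, σ²)` distribution. -/
noncomputable def gpdf (σ t : ℝ) : ℝ :=
  (2 * Real.pi * σ ^ 2) ^ (-(1 : ℝ) / 2) * Real.exp (-t ^ 2 / (2 * σ ^ 2))

/-!
The logarithm of the posterior density is `1 / σ²`-strongly concave, which alone gives it Gaussian
tails and hence finite exponential moments. If `e ^ f` is a density on `ℝ` with `f` `κ`-strongly
concave and mean `μ`, then
`((z - μ) e ^ f)' = (1 + (z - μ) f') e ^ f ≤ (1 - κ (z - μ)² + f'(μ) (z - μ)) e ^ f`,
where `f'` is the right derivative. Over a large symmetric interval the left side has nonnegative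
integral, so `0 ≤ 1 - κ Var`. For the score–variance identity, `π_η` is the exponential tilt of
`π_0` by `z ↦ η z / σ²`, so its mean and variance are the first two derivatives of the cumulant
generating function of `π_0` at `η / σ²`.
-/

section

open ProbabilityTheory Set Filter Topology

variable {κ σ : ℝ} {f L : ℝ → ℝ}

theorem continuous_of_strongConcaveOn (hκ : 0 ≤ κ) (hf : StrongConcaveOn univ κ f) :
    Continuous f :=
  continuousOn_univ.1 <|
    (strongConcaveOn_zero.1 (hf.mono hκ)).continuousOn isOpen_univ

theorem strongConcaveOn_add_mul (hf : StrongConcaveOn univ κ f) (t : ℝ) :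
    StrongConcaveOn univ κ fun z => f z + t * z := by
  rw [strongConcaveOn_iff_convex] at hf ⊢
  have hlin : ConcaveOn ℝ univ fun z : ℝ => t * z :=
    (LinearMap.mul ℝ ℝ t).concaveOn convex_univ
  refine (hf.add hlin).congr fun z _ => ?_
  simp only [Pi.add_apply]
  ring

theorem exists_le_quadratic_of_strongConcaveOn (hf : StrongConcaveOn univ κ f) :
    ∃ b c, ∀ z, f z ≤ -(κ / 2) * z ^ 2 + b * z + c := by
  have hconc := strongConcaveOn_iff_convex.1 hf
  obtain ⟨b, c, hbc⟩ := hconc.neg.exists_affine_le_real isClosed_univ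
    (hconc.neg.continuousOn isOpen_univ).lowerSemicontinuousOn
  refine ⟨-b, -c, fun z => ?_⟩
  have := hbc z (mem_univ z)
  simp only [Pi.neg_apply, Real.norm_eq_abs, sq_abs] at this
  linarith

theorem exists_rightDeriv_of_strongConcaveOn (hf : StrongConcaveOn univ κ f) :
    ∃ r : ℝ → ℝ, (∀ z, HasDerivWithinAt f (r z) (Ioi z) z) ∧
      ∀ w z, (z - w) * (r z - r w) ≤ -κ * (z - w) ^ 2 := by
  set g : ℝ → ℝ := -fun z => f z + κ / 2 * ‖z‖ ^ 2 with hg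
  have hconv : ConvexOn ℝ univ g := (strongConcaveOn_iff_convex.1 hf).neg
  have hderiv (z : ℝ) : HasDerivWithinAt g (derivWithin g (Ioi z) z) (Ioi z) z :=
    hconv.hasDerivWithinAt_rightDeriv_of_mem_interior (by simp)
  have hmono : Monotone fun z => derivWithin g (Ioi z) z := by
    simpa only [interior_univ, monotoneOn_univ] using hconv.monotoneOn_rightDeriv
  have hfg : f = fun z => -g z - κ / 2 * z ^ 2 := by
    ext z
    simp [hg]
  refine ⟨fun z => -derivWithin g (Ioi z) z - κ * z, fun z => ?_, fun w z => ?_⟩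
  · have hsq := (((hasDerivAt_id z).pow 2).const_mul (κ / 2)).hasDerivWithinAt (s := Ioi z)
    rw [hfg]
    refine ((hderiv z).neg.sub hsq).congr_deriv ?_
    simp only [Nat.cast_ofNat, id_eq, Nat.add_one_sub_one, pow_one, mul_one, sub_right_inj]
    ring
  · have : 0 ≤ (z - w) * (derivWithin g (Ioi z) z - derivWithin g (Ioi w) w) := by
      rcases le_total w z with h | h
      · exact mul_nonneg (sub_nonneg.2 h) (sub_nonneg.2 (hmono h))
      · exact mul_nonneg_of_nonpos_of_nonpos (sub_nonpos.2 h) (sub_nonpos.2 (hmono h))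
    linarith

theorem integrable_exp_neg_quadratic {a : ℝ} (ha : 0 < a) (b c : ℝ) :
    Integrable fun z : ℝ => exp (-a * z ^ 2 + b * z + c) := by
  refine (integrable_cexp_quadratic (b := a) (by simpa using ha) b c).norm.congr
    (.of_forall fun z => ?_)
  simp only [Complex.norm_exp]
  norm_cast

theorem integrable_exp_of_strongConcaveOn (hκ : 0 < κ) (hf : StrongConcaveOn univ κ f) :
    Integrable fun z => exp (f z) := by
  obtain ⟨b, c, hbc⟩ := exists_le_quadratic_of_strongConcaveOn hf
  refine (integrable_exp_neg_quadratic (half_pos hκ) b c).mono'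
    (continuous_of_strongConcaveOn hκ.le hf).rexp.aestronglyMeasurable (.of_forall fun z => ?_)
  rw [norm_of_nonneg (exp_pos _).le]
  exact exp_le_exp.2 (hbc z)

theorem isProbabilityMeasure_tilted_of_strongConcaveOn (hκ : 0 < κ)
    (hf : StrongConcaveOn univ κ f) : IsProbabilityMeasure (volume.tilted f) :=
  isProbabilityMeasure_tilted (integrable_exp_of_strongConcaveOn hκ hf)

theorem integrableExpSet_id_tilted_of_strongConcaveOn (hκ : 0 < κ)
    (hf : StrongConcaveOn univ κ f) : integrableExpSet id (volume.tilted f) = univ := by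
  refine eq_univ_of_forall fun t => ?_
  simp only [integrableExpSet, mem_ofPred_eq, id_eq]
  rw [integrable_tilted_iff (integrable_exp_of_strongConcaveOn hκ hf)]
  simpa only [smul_eq_mul, ← exp_add] using
    integrable_exp_of_strongConcaveOn hκ (strongConcaveOn_add_mul hf t)

theorem memLp_two_id_tilted_of_strongConcaveOn (hκ : 0 < κ) (hf : StrongConcaveOn univ κ f) :
    MemLp id 2 (volume.tilted f) :=
  memLp_of_mem_interior_integrableExpSet
    (by simp [integrableExpSet_id_tilted_of_strongConcaveOn hκ hf]) 2

theorem integral_nonneg_of_rightDeriv_le {g g' φ : ℝ → ℝ} (hg : Continuous g)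
    (hderiv : ∀ z, HasDerivWithinAt g (g' z) (Ioi z) z) (hφ : Integrable φ)
    (hle : ∀ z, g' z ≤ φ z) (hends : ∀ᶠ b in atTop, g (-b) ≤ g b) : 0 ≤ ∫ z, φ z := by
  refine ge_of_tendsto (intervalIntegral_tendsto_integral hφ
    tendsto_neg_atTop_atBot tendsto_id) ?_
  filter_upwards [hends, eventually_ge_atTop 0] with b hb hb0
  calc
    0 ≤ g b - g (-b) := sub_nonneg.2 hb
    _ ≤ ∫ z in -b..b, φ z := intervalIntegral.sub_le_integral_of_hasDeriv_right_of_le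
      (neg_le_self hb0) hg.continuousOn (fun z _ => hderiv z) hφ.integrableOn fun z _ => hle z

theorem exists_integral_tilted_nonneg_of_strongConcaveOn (hκ : 0 < κ)
    (hf : StrongConcaveOn univ κ f) (a : ℝ) :
    ∃ c, 0 ≤ ∫ z, (1 - κ * (z - a) ^ 2 + c * (z - a)) ∂volume.tilted f := by
  obtain ⟨r, hr, hr_le⟩ := exists_rightDeriv_of_strongConcaveOn hf
  have hexp := integrable_exp_of_strongConcaveOn hκ hf
  have hfc := continuous_of_strongConcaveOn hκ.le hf
  have := isProbabilityMeasure_tilted_of_strongConcaveOn hκ hf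
  have hmem : MemLp (fun z => z - a) 2 (volume.tilted f) :=
    (memLp_two_id_tilted_of_strongConcaveOn hκ hf).sub (memLp_const a)
  set q : ℝ → ℝ := fun z => 1 - κ * (z - a) ^ 2 + r a * (z - a)
  have hint : Integrable fun z => exp (f z) * q z := by
    have hq : Integrable q (volume.tilted f) :=
      ((integrable_const 1).sub (hmem.integrable_sq.const_mul κ)).add
        ((hmem.integrable one_le_two).const_mul (r a))
    simpa only [smul_eq_mul] using (integrable_tilted_iff hexp q).1 hq
  have hderiv (z : ℝ) : HasDerivWithinAt (fun z => (z - a) * exp (f z))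
      (exp (f z) * (1 + (z - a) * r z)) (Ioi z) z :=
    ((((hasDerivAt_id z).sub_const a).hasDerivWithinAt).mul (hr z).exp).congr_deriv (by
      simp only [id]; ring)
  have hle (z : ℝ) : exp (f z) * (1 + (z - a) * r z) ≤ exp (f z) * q z := by
    gcongr
    have := hr_le a z
    simp only [q]
    linarith
  have hends : ∀ᶠ b in atTop, (-b - a) * exp (f (-b)) ≤ (b - a) * exp (f b) := by
    filter_upwards [eventually_ge_atTop |a|] with b hb
    obtain ⟨hab, hba⟩ := abs_le.1 hb
    exact (mul_nonpos_of_nonpos_of_nonneg (by linarith) (exp_pos _).le).trans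
      (mul_nonneg (by linarith) (exp_pos _).le)
  have hnonneg : 0 ≤ ∫ z, exp (f z) * q z :=
    integral_nonneg_of_rightDeriv_le (by fun_prop) hderiv hint hle hends
  refine ⟨r a, ?_⟩
  rw [integral_tilted]
  simp only [smul_eq_mul, div_mul_eq_mul_div, integral_div]
  exact div_nonneg hnonneg (integral_exp_pos hexp).le

theorem variance_tilted_le_inv_of_strongConcaveOn (hκ : 0 < κ) (hf : StrongConcaveOn univ κ f) :
    Var[id; volume.tilted f] ≤ κ⁻¹ := by
  have := isProbabilityMeasure_tilted_of_strongConcaveOn hκ hf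
  have hmem := memLp_two_id_tilted_of_strongConcaveOn hκ hf
  set μ := ∫ z, z ∂volume.tilted f with hμ
  obtain ⟨c, hc⟩ := exists_integral_tilted_nonneg_of_strongConcaveOn hκ hf μ
  have hcent : MemLp (fun z => z - μ) 2 (volume.tilted f) := hmem.sub (memLp_const μ)
  have hid : Integrable (fun z => z) (volume.tilted f) := hmem.integrable one_le_two
  have hzero : ∫ z, (z - μ) ∂volume.tilted f = 0 := by
    rw [integral_sub hid (integrable_const μ), integral_const, probReal_univ, one_smul, hμ,
      sub_self]
  have hvar : Var[id; volume.tilted f] = ∫ z, (z - μ) ^ 2 ∂volume.tilted f :=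
    variance_eq_integral aemeasurable_id
  have hsq : Integrable (fun z => κ * (z - μ) ^ 2) (volume.tilted f) :=
    hcent.integrable_sq.const_mul κ
  have hlin : Integrable (fun z => c * (z - μ)) (volume.tilted f) :=
    (hcent.integrable one_le_two).const_mul c
  have hsub : Integrable (fun z => 1 - κ * (z - μ) ^ 2) (volume.tilted f) :=
    (integrable_const 1).sub hsq
  rw [integral_add hsub hlin, integral_sub (integrable_const 1) hsq, integral_const_mul,
    integral_const_mul, hzero, ← hvar, integral_const, probReal_univ, one_smul, mul_zero,
    add_zero, sub_nonneg] at hc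
  rwa [← one_div, le_div_iff₀' hκ]

theorem nullSingletonClass_tilted {Ω : Type*} [MeasurableSpace Ω] (μ : Measure Ω)
    [NullSingletonClass μ] (g : Ω → ℝ) : NullSingletonClass (μ.tilted g) :=
  inferInstanceAs (NullSingletonClass (μ.withDensity _))

theorem variance_id_pos {μ : Measure ℝ} [IsProbabilityMeasure μ] [NullSingletonClass μ]
    (hμ : MemLp id 2 μ) : 0 < Var[id; μ] := by
  refine (variance_nonneg id μ).lt_of_ne' fun hzero => ?_
  have hae : id =ᵐ[μ] fun _ => μ[id] := by
    rw [← evariance_eq_zero_iff aemeasurable_id, ← hμ.ofReal_variance_eq, hzero,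
      ENNReal.ofReal_zero]
  have hne : ∀ᵐ z ∂μ, z ≠ μ[id] := Measure.ae_ne μ _
  obtain ⟨z, hz, hz'⟩ := (hae.and hne).exists
  exact hz' hz

theorem hasDerivAt_integral_tilted_mul {Ω : Type*} [MeasurableSpace Ω] {μ : Measure Ω}
    {X : Ω → ℝ} {t : ℝ} (ht : t ∈ interior (integrableExpSet X μ)) :
    HasDerivAt (fun s => ∫ ω, X ω ∂μ.tilted (s * X ·)) Var[X; μ.tilted (t * X ·)] t := by
  have hmean : (fun s => ∫ ω, X ω ∂μ.tilted (s * X ·)) =ᶠ[𝓝 t] deriv (cgf X μ) := by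
    filter_upwards [isOpen_interior.mem_nhds ht] with s hs using integral_tilted_mul_self hs
  rw [variance_tilted_mul ht, iteratedDeriv_succ, iteratedDeriv_one]
  exact (analyticAt_cgf ht).deriv.differentiableAt.hasDerivAt.congr_of_eventuallyEq hmean

theorem tilted_add_const {Ω : Type*} [MeasurableSpace Ω] (μ : Measure Ω) (g : Ω → ℝ) (c : ℝ) :
    μ.tilted (fun ω => g ω + c) = μ.tilted g := by
  simp only [Measure.tilted, exp_add, integral_mul_const,
    mul_div_mul_right _ _ (exp_pos c).ne']

theorem gpdf_pos (hσ : σ ≠ 0) (t : ℝ) : 0 < gpdf σ t := by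
  unfold gpdf
  positivity

theorem log_gpdf_sub (hσ : σ ≠ 0) (z η : ℝ) :
    log (gpdf σ (z - η)) = log (gpdf σ z) + η / σ ^ 2 * z - η ^ 2 / (2 * σ ^ 2) := by
  have hconst : (2 * Real.pi * σ ^ 2) ^ (-(1 : ℝ) / 2) ≠ 0 := by positivity
  simp only [gpdf, log_mul hconst (exp_pos _).ne', log_exp]
  field_simp
  ring

theorem log_gpdf_mul (hσ : σ ≠ 0) (hL : ∀ z, 0 < L z) (z η : ℝ) :
    log (gpdf σ (z - η) * L z) =
      log (gpdf σ z * L z) + η / σ ^ 2 * z - η ^ 2 / (2 * σ ^ 2) := by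
  rw [log_mul (gpdf_pos hσ _).ne' (hL z).ne', log_mul (gpdf_pos hσ _).ne' (hL z).ne',
    log_gpdf_sub hσ]
  ring

theorem exp_log_gpdf_mul (hσ : σ ≠ 0) (hL : ∀ z, 0 < L z) (z η : ℝ) :
    exp (log (gpdf σ (z - η) * L z)) = gpdf σ (z - η) * L z :=
  exp_log (mul_pos (gpdf_pos hσ _) (hL z))

/-- The posterior `π_η` of a latent variable with prior `N(η, σ²)` and likelihood contribution `L`:
the probability measure with density proportional to `z ↦ φ_σ(z - η) L(z)`. Tilting Lebesgue measure
by the logarithm of this density supplies the normalising constant. -/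
noncomputable def gaussianPosterior (σ : ℝ) (L : ℝ → ℝ) (η : ℝ) : Measure ℝ :=
  volume.tilted fun z => log (gpdf σ (z - η) * L z)

theorem integral_gaussianPosterior (hσ : σ ≠ 0) (hL : ∀ z, 0 < L z) (η : ℝ) (g : ℝ → ℝ) :
    ∫ z, g z ∂gaussianPosterior σ L η =
      (∫ z, gpdf σ (z - η) * L z)⁻¹ * ∫ z, g z * (gpdf σ (z - η) * L z) := by
  rw [gaussianPosterior, integral_tilted, ← integral_const_mul]
  simp only [exp_log_gpdf_mul hσ hL, smul_eq_mul]
  congr! 2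
  ring

theorem integrableExpSet_id_gaussianPosterior_zero (hσ : σ ≠ 0) (hL : ∀ z, 0 < L z)
    (hint : ∀ η, Integrable fun z => gpdf σ (z - η) * L z) :
    integrableExpSet id (gaussianPosterior σ L 0) = univ := by
  refine eq_univ_of_forall fun t => ?_
  have hexp (η : ℝ) : Integrable fun z => exp (log (gpdf σ (z - η) * L z)) := by
    simpa only [exp_log_gpdf_mul hσ hL] using hint η
  simp only [integrableExpSet, mem_ofPred_eq, gaussianPosterior, id_eq]
  rw [integrable_tilted_iff (hexp 0)]
  refine ((hexp (t * σ ^ 2)).mul_const (exp ((t * σ ^ 2) ^ 2 / (2 * σ ^ 2)))).congr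
    (.of_forall fun z => ?_)
  simp only [smul_eq_mul, ← exp_add, log_gpdf_mul hσ hL z (t * σ ^ 2), sub_zero]
  congr 1
  field_simp
  ring

theorem gaussianPosterior_eq_tilted (hσ : σ ≠ 0) (hL : ∀ z, 0 < L z)
    (hint : Integrable fun z => gpdf σ z * L z) (η : ℝ) :
    gaussianPosterior σ L η = (gaussianPosterior σ L 0).tilted (η / σ ^ 2 * id ·) := by
  have hint₀ : Integrable fun z => exp (log (gpdf σ (z - 0) * L z)) := by
    simp only [exp_log_gpdf_mul hσ hL]
    simpa only [sub_zero] using hint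
  simp only [gaussianPosterior]
  rw [tilted_tilted hint₀, ← tilted_add_const _ (_ + _) (-(η ^ 2 / (2 * σ ^ 2)))]
  congr with z
  rw [log_gpdf_mul hσ hL z η, Pi.add_apply, sub_zero, id, sub_eq_add_neg]

theorem hasDerivAt_integral_gaussianPosterior (hσ : σ ≠ 0) (hL : ∀ z, 0 < L z)
    (hint : ∀ η, Integrable fun z => gpdf σ (z - η) * L z) (η : ℝ) :
    HasDerivAt (fun η => ∫ z, z ∂gaussianPosterior σ L η)
      (Var[id; gaussianPosterior σ L η] / σ ^ 2) η := by
  have htilt : gaussianPosterior σ L =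
      fun η => (gaussianPosterior σ L 0).tilted (η / σ ^ 2 * id ·) :=
    funext <| gaussianPosterior_eq_tilted hσ hL (by simpa only [sub_zero] using hint 0)
  have hmem : η / σ ^ 2 ∈ interior (integrableExpSet id (gaussianPosterior σ L 0)) := by
    simp [integrableExpSet_id_gaussianPosterior_zero hσ hL hint]
  have hcomp := (hasDerivAt_integral_tilted_mul hmem).comp η ((hasDerivAt_id η).div_const (σ ^ 2))
  rw [mul_one_div] at hcomp
  rw [htilt]
  exact hcomp

theorem strongConcaveOn_log_gpdf_mul (hσ : σ ≠ 0) (hL : ∀ z, 0 < L z)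
    (hconc : ConcaveOn ℝ univ fun z => log (L z)) (η : ℝ) :
    StrongConcaveOn univ (σ ^ 2)⁻¹ fun z => log (gpdf σ (z - η) * L z) := by
  rw [strongConcaveOn_iff_convex]
  have hlin : ConcaveOn ℝ univ fun z : ℝ => η / σ ^ 2 * z :=
    (LinearMap.mul ℝ ℝ (η / σ ^ 2)).concaveOn convex_univ
  refine ((hconc.add hlin).add_const (log (gpdf σ 0) - η ^ 2 / (2 * σ ^ 2))).congr fun z _ => ?_
  have hz : log (gpdf σ 0) = log (gpdf σ z) + (σ ^ 2)⁻¹ / 2 * z ^ 2 := by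
    have := log_gpdf_sub hσ z z
    rw [sub_self] at this
    rw [this]
    field_simp
    ring
  simp only [Pi.add_apply, log_gpdf_mul hσ hL z η, log_mul (gpdf_pos hσ z).ne' (hL z).ne',
    Real.norm_eq_abs, sq_abs, hz]
  ring

theorem logconcave_posterior_variance_bound_general (σ : ℝ) (hσ : 0 < σ) (L : ℝ → ℝ)
    (hLpos : ∀ z, 0 < L z) (hlogconc : ConcaveOn ℝ univ fun z => log (L z))
    (C m V : ℝ → ℝ)
    (hC : C = fun η => ∫ z, gpdf σ (z - η) * L z)
    (hm : m = fun η => (C η)⁻¹ * ∫ z, z * (gpdf σ (z - η) * L z))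
    (hV : V = fun η => (C η)⁻¹ * (∫ z, z ^ 2 * (gpdf σ (z - η) * L z)) - (m η) ^ 2) :
    ∀ η : ℝ, 0 < V η ∧ V η ≤ σ ^ 2 ∧ HasDerivAt m (V η / σ ^ 2) η ∧
      V η / σ ^ 2 ∈ Ioc (0 : ℝ) 1 := by
  intro η
  have hσ2 : 0 < σ ^ 2 := by positivity
  have hκ : 0 < (σ ^ 2)⁻¹ := inv_pos.2 hσ2
  have hstrong := strongConcaveOn_log_gpdf_mul hσ.ne' hLpos hlogconc
  have : IsProbabilityMeasure (gaussianPosterior σ L η) :=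
    isProbabilityMeasure_tilted_of_strongConcaveOn hκ (hstrong η)
  have : NullSingletonClass (gaussianPosterior σ L η) := nullSingletonClass_tilted _ _
  have hmem : MemLp id 2 (gaussianPosterior σ L η) :=
    memLp_two_id_tilted_of_strongConcaveOn hκ (hstrong η)
  have hmean : m = fun η => ∫ z, z ∂gaussianPosterior σ L η := by
    simp only [hm, hC, integral_gaussianPosterior hσ.ne' hLpos]
  have hvar : V η = Var[id; gaussianPosterior σ L η] := by
    simp only [hV, hC, hmean, variance_eq_sub hmem, Pi.pow_apply, id,
      ← integral_gaussianPosterior hσ.ne' hLpos η (· ^ 2)]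
  have hpos : 0 < V η := hvar ▸ variance_id_pos hmem
  have hle : V η ≤ σ ^ 2 := by
    simpa only [hvar, gaussianPosterior, inv_inv] using
      variance_tilted_le_inv_of_strongConcaveOn hκ (hstrong η)
  have hderiv : HasDerivAt m (V η / σ ^ 2) η := by
    rw [hmean, hvar]
    refine hasDerivAt_integral_gaussianPosterior hσ.ne' hLpos (fun η => ?_) η
    simpa only [exp_log_gpdf_mul hσ.ne' hLpos] using
      integrable_exp_of_strongConcaveOn hκ (hstrong η)
  exact ⟨hpos, hle, hderiv, div_pos hpos hσ2, (div_le_one hσ2).2 hle⟩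

theorem concaveOn_log_of_deriv_deriv_nonpos (hLpos : ∀ z, 0 < L z) (hL : ContDiff ℝ 2 L)
    (h : ∀ z, deriv (deriv fun t => log (L t)) z ≤ 0) :
    ConcaveOn ℝ univ fun z => log (L z) := by
  have hlog : ContDiff ℝ 2 fun z => log (L z) := hL.log fun z => (hLpos z).ne'
  exact concaveOn_univ_of_deriv2_nonpos (hlog.differentiable two_ne_zero)
    ((hlog.deriv' (n := 1)).differentiable one_ne_zero) h

end

/-- Under a positive, twice continuously differentiable, log-concave likelihood
contribution `L`, the posterior `π_η ∝ φ_σ(· - η) L(·)` has variance in `(0, σ²]`,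
and the posterior mean satisfies the score–variance identity
`m′(η) = Var(π_η)/σ² ∈ (0, 1]`. -/
theorem logconcave_posterior_variance_bound (σ : ℝ) (hσ : 0 < σ) (L : ℝ → ℝ)
    (hLpos : ∀ z, 0 < L z) (hL : ContDiff ℝ 2 L)
    (hlogconc : ∀ z, deriv (deriv fun t => Real.log (L t)) z ≤ 0)
    (hint : ∀ η : ℝ, Integrable (fun z => (1 + z ^ 2) * (gpdf σ (z - η) * L z)))
    (C m V : ℝ → ℝ)
    (hC : C = fun η => ∫ z, gpdf σ (z - η) * L z)
    (hm : m = fun η => (C η)⁻¹ * ∫ z, z * (gpdf σ (z - η) * L z))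
    (hV : V = fun η => (C η)⁻¹ * (∫ z, z ^ 2 * (gpdf σ (z - η) * L z)) - (m η) ^ 2) :
    ∀ η : ℝ, 0 < V η ∧ V η ≤ σ ^ 2 ∧ HasDerivAt m (V η / σ ^ 2) η ∧
      V η / σ ^ 2 ∈ Set.Ioc (0 : ℝ) 1 :=
  logconcave_posterior_variance_bound_general σ hσ L hLpos
    (concaveOn_log_of_deriv_deriv_nonpos hLpos hL hlogconc) C m V hC hm hV
end

section
/- Let R : ℝ → ℝ be twice continuously differentiable with R″(z) > 0 for all z and ∫_ℝ e^{−R(z)} dz < ∞, and let μ be the probability measure on ℝ with density proportional to e^{−R}. Then for every continuously differentiable f : ℝ → ℝ with ∫ f² dμ < ∞ and ∫ (f′(z))²/R″(z) dμ(z) < ∞, the variance satisfies Var_μ(f) ≤ ∫_ℝ (f′(z))²/R″(z) dμ(z), where Var_μ(f) = ∫ f² dμ − (∫ f dμ)². -/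
open MeasureTheory

/-!
Being integrable, `exp (-R)` cannot be strictly monotone, so `R` has a critical point `z₀`. Put
`g = f - f z₀`, `p = exp (-R)` and `r = R'`, so that `p' = -r p`. Young's inequality
`2 u v ≤ u² r' + v² / r'` with `u = g / r`, `v = g'` turns the derivative of `φ = (g² / r) p` into
the pointwise bound `φ' ≤ p g'² / r' - p g²`. Since `φ` extends continuously by `0` through `z₀` and
has the sign of `r`, its increment over any interval containing `z₀` is nonnegative; integrating
gives `∫ g² dμ ≤ ∫ g'² / r' dμ`, and the variance of `f` is at most `∫ g² dμ`.
-/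

open ProbabilityTheory Filter Set Topology

lemma eq_zero_of_monotone_of_integrable {α : Type*} [Preorder α] [MeasurableSpace α]
    {μ : Measure α} (hIci : ∀ a, μ (Ici a) = ⊤) (hIic : ∀ a, μ (Iic a) = ⊤) {w : α → ℝ}
    (hw : Monotone w) (hint : Integrable w μ) (a : α) : w a = 0 := by
  apply le_antisymm <;> by_contra! ha
  · have hsub : Ici a ⊆ {x | w a ≤ w x} := fun _ hx => hw hx
    exact ((measure_mono hsub).trans_lt (hint.measure_ge_lt_top ha)).ne (hIci a)
  · have hsub : Iic a ⊆ {x | w x ≤ w a} := fun _ hx => hw hx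
    exact ((measure_mono hsub).trans_lt (hint.measure_le_lt_top ha)).ne (hIic a)

lemma not_strictMono_of_integrable {w : ℝ → ℝ} (hint : Integrable w) : ¬ StrictMono w := by
  intro hw
  have hzero := eq_zero_of_monotone_of_integrable (fun _ => Real.volume_Ici)
    (fun _ => Real.volume_Iic) hw.monotone hint
  simpa [hzero] using hw zero_lt_one

lemma exists_hasDerivAt_eq_zero_of_integrable {w w' : ℝ → ℝ}
    (hw : ∀ z, HasDerivAt w (w' z) z) (hint : Integrable w) : ∃ z, w' z = 0 := by
  by_contra! hne
  rcases hasDerivWithinAt_forall_lt_or_forall_gt_of_forall_ne convex_univ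
    (fun z _ => (hw z).hasDerivWithinAt) (fun z _ => hne z) with hneg | hpos
  · exact not_strictMono_of_integrable hint.neg <|
      strictMono_of_hasDerivAt_pos (fun z => (hw z).neg) fun z => neg_pos.2 (hneg z trivial)
  · exact not_strictMono_of_integrable hint <|
      strictMono_of_hasDerivAt_pos hw fun z => hpos z trivial

lemma continuousAt_sq_div {𝕜 : Type*} [NontriviallyNormedField 𝕜] {g r : 𝕜 → 𝕜} {g' r' z₀ : 𝕜}
    (hg : HasDerivAt g g' z₀) (hr : HasDerivAt r r' z₀) (hr' : r' ≠ 0)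
    (hg₀ : g z₀ = 0) (hr₀ : r z₀ = 0) : ContinuousAt (fun z => g z ^ 2 / r z) z₀ := by
  have hslope : Tendsto (fun z => slope g z₀ z / slope r z₀ z * g z) (𝓝[≠] z₀) (𝓝 0) := by
    have hg_lim : Tendsto g (𝓝[≠] z₀) (𝓝 0) := hg₀ ▸ hg.continuousAt.continuousWithinAt
    simpa using (hg.tendsto_slope.div hr.tendsto_slope hr').mul hg_lim
  rw [continuousAt_iff_punctured_nhds]
  simp only [hg₀, hr₀, div_zero]
  refine hslope.congr' ?_
  filter_upwards [self_mem_nhdsWithin] with z hz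
  have hsub : z - z₀ ≠ 0 := sub_ne_zero.2 hz
  rw [slope_def_field, slope_def_field, hg₀, hr₀, sub_zero, sub_zero,
    div_div_div_cancel_right₀ hsub]
  ring

lemma two_mul_mul_sub_sq_mul_le_sq_div {K : Type*} [Field K] [LinearOrder K] [IsStrictOrderedRing K]
    (u v : K) {m : K} (hm : 0 < m) :
    2 * u * v - u ^ 2 * m ≤ v ^ 2 / m := by
  rw [le_div_iff₀ hm]
  nlinarith [sq_nonneg (v - u * m)]

/-- The function `(g² / r) p` whose increments bound the difference of the two sides of the weighted
Poincaré inequality. At a common zero of `g` and `r` the convention `0 / 0 = 0` gives its limit. -/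
noncomputable def boundaryTerm (p r g : ℝ → ℝ) (z : ℝ) : ℝ := g z ^ 2 / r z * p z

section WeightedPoincare

variable {p r r' g g' : ℝ → ℝ} {z₀ : ℝ}

lemma hasDerivAt_boundaryTerm {m v z : ℝ} (hp : HasDerivAt p (-(r z * p z)) z)
    (hr : HasDerivAt r m z) (hg : HasDerivAt g v z) (hrz : r z ≠ 0) :
    HasDerivAt (boundaryTerm p r g)
      (p z * (2 * (g z / r z) * v - (g z / r z) ^ 2 * m) - p z * g z ^ 2) z := by
  refine (((hg.pow 2).div hr hrz).mul hp).congr_deriv ?_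
  simp only [Pi.div_apply, Pi.pow_apply]
  field_simp
  ring

lemma continuous_boundaryTerm (hp : Continuous p) (hr : ∀ z, HasDerivAt r (r' z) z)
    (hr' : ∀ z, 0 < r' z) (hg : ∀ z, HasDerivAt g (g' z) z) (hr₀ : r z₀ = 0) (hg₀ : g z₀ = 0) :
    Continuous (boundaryTerm p r g) := by
  have hr_inj : Function.Injective r := (strictMono_of_hasDerivAt_pos hr hr').injective
  refine Continuous.mul (continuous_iff_continuousAt.2 fun z => ?_) hp
  rcases eq_or_ne z z₀ with rfl | hz
  · exact continuousAt_sq_div (hg z) (hr z) (hr' z).ne' hg₀ hr₀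
  · have hrz : r z ≠ 0 := hr₀ ▸ hr_inj.ne hz
    exact ((hg z).continuousAt.pow 2).div (hr z).continuousAt hrz

variable (hp : ∀ z, HasDerivAt p (-(r z * p z)) z) (hp₀ : ∀ z, 0 ≤ p z)
    (hr : ∀ z, HasDerivAt r (r' z) z) (hr' : ∀ z, 0 < r' z) (hg : ∀ z, HasDerivAt g (g' z) z)
    (hr₀ : r z₀ = 0) (hg₀ : g z₀ = 0)

include hp hp₀ hr hr' hg hr₀ hg₀

lemma boundaryTerm_sub_le_integral {a b : ℝ} (hab : a ≤ b) (hz₀ : z₀ ∉ Ioo a b)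
    (hint : IntegrableOn (fun z => p z * (g' z ^ 2 / r' z)) (Icc a b)) :
    boundaryTerm p r g b - boundaryTerm p r g a ≤
      ∫ z in a..b, (p z * (g' z ^ 2 / r' z) - p z * g z ^ 2) := by
  have hcont : Continuous fun z => p z * g z ^ 2 :=
    continuous_iff_continuousAt.2 fun z => (hp z).continuousAt.mul ((hg z).continuousAt.pow 2)
  have hp_cont : Continuous p := continuous_iff_continuousAt.2 fun z => (hp z).continuousAt
  have hr_inj : Function.Injective r := (strictMono_of_hasDerivAt_pos hr hr').injective
  refine intervalIntegral.sub_le_integral_of_hasDeriv_right_of_le hab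
    (continuous_boundaryTerm hp_cont hr hr' hg hr₀ hg₀).continuousOn
    (g' := fun z => p z * (2 * (g z / r z) * g' z - (g z / r z) ^ 2 * r' z) - p z * g z ^ 2)
    (fun z hz => ?_) (hint.sub hcont.integrableOn_Icc) (fun z _ => ?_)
  · have hrz : r z ≠ 0 := hr₀ ▸ hr_inj.ne (ne_of_mem_of_not_mem hz hz₀)
    exact (hasDerivAt_boundaryTerm (hp z) (hr z) (hg z) hrz).hasDerivWithinAt
  · exact sub_le_sub_right (mul_le_mul_of_nonneg_left
      (two_mul_mul_sub_sq_mul_le_sq_div _ _ (hr' z)) (hp₀ z)) _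

lemma intervalIntegral_mul_sq_le {a b : ℝ} (ha : a ≤ z₀) (hb : z₀ ≤ b)
    (hint : IntegrableOn (fun z => p z * (g' z ^ 2 / r' z)) (Icc a b)) :
    ∫ z in a..b, p z * g z ^ 2 ≤ ∫ z in a..b, p z * (g' z ^ 2 / r' z) := by
  have hcont : Continuous fun z => p z * g z ^ 2 :=
    continuous_iff_continuousAt.2 fun z => (hp z).continuousAt.mul ((hg z).continuousAt.pow 2)
  have hr_mono : Monotone r := (strictMono_of_hasDerivAt_pos hr hr').monotone
  have hleft := boundaryTerm_sub_le_integral hp hp₀ hr hr' hg hr₀ hg₀ ha (by simp)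
    (hint.mono_set (Icc_subset_Icc_right hb))
  have hright := boundaryTerm_sub_le_integral hp hp₀ hr hr' hg hr₀ hg₀ hb (by simp)
    (hint.mono_set (Icc_subset_Icc_left ha))
  have hφa : boundaryTerm p r g a ≤ 0 := mul_nonpos_of_nonpos_of_nonneg
    (div_nonpos_of_nonneg_of_nonpos (sq_nonneg _) (hr₀ ▸ hr_mono ha)) (hp₀ a)
  have hφb : 0 ≤ boundaryTerm p r g b :=
    mul_nonneg (div_nonneg (sq_nonneg _) (hr₀ ▸ hr_mono hb)) (hp₀ b)
  have hint_left : IntervalIntegrable (fun z => p z * g z ^ 2) volume a b :=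
    hcont.intervalIntegrable a b
  have hint_right : IntervalIntegrable (fun z => p z * (g' z ^ 2 / r' z)) volume a b :=
    (intervalIntegrable_iff_integrableOn_Icc_of_le (ha.trans hb)).2 hint
  have hsplit := intervalIntegral.integral_add_adjacent_intervals
    ((hint_right.sub hint_left).mono_set (uIcc_subset_uIcc_left (mem_uIcc_of_le ha hb)))
    ((hint_right.sub hint_left).mono_set (uIcc_subset_uIcc_right (mem_uIcc_of_le ha hb)))
  rw [intervalIntegral.integral_sub hint_right hint_left] at hsplit
  linarith

theorem integrable_mul_sq_and_integral_mul_sq_le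
    (hint : Integrable fun z => p z * (g' z ^ 2 / r' z)) :
    Integrable (fun z => p z * g z ^ 2) ∧
      ∫ z, p z * g z ^ 2 ≤ ∫ z, p z * (g' z ^ 2 / r' z) := by
  have hcont : Continuous fun z => p z * g z ^ 2 :=
    continuous_iff_continuousAt.2 fun z => (hp z).continuousAt.mul ((hg z).continuousAt.pow 2)
  have hbound : ∀ᶠ x : ℝ in atTop,
      ∫ z in -x..x, p z * g z ^ 2 ≤ ∫ z, p z * (g' z ^ 2 / r' z) := by
    filter_upwards [eventually_ge_atTop z₀, eventually_ge_atTop (-z₀)] with x hx hx'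
    have hx_neg : -x ≤ z₀ := neg_le.1 hx'
    calc ∫ z in -x..x, p z * g z ^ 2
      _ ≤ ∫ z in -x..x, p z * (g' z ^ 2 / r' z) :=
        intervalIntegral_mul_sq_le hp hp₀ hr hr' hg hr₀ hg₀ hx_neg hx hint.integrableOn
      _ = ∫ z in Ioc (-x) x, p z * (g' z ^ 2 / r' z) :=
        intervalIntegral.integral_of_le (hx_neg.trans hx)
      _ ≤ ∫ z, p z * (g' z ^ 2 / r' z) :=
        setIntegral_le_integral hint <| Eventually.of_forall fun z =>
          mul_nonneg (hp₀ z) (div_nonneg (sq_nonneg _) (hr' z).le)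
  have hint_left : Integrable fun z => p z * g z ^ 2 := by
    refine integrable_of_intervalIntegral_norm_bounded
      (∫ z, p z * (g' z ^ 2 / r' z)) (fun x => hcont.integrableOn_Ioc)
      tendsto_neg_atTop_atBot tendsto_id ?_
    simpa only [id_eq, norm_mul, norm_pow, Real.norm_eq_abs, sq_abs, abs_of_nonneg (hp₀ _)]
      using hbound
  exact ⟨hint_left, le_of_tendsto (intervalIntegral_tendsto_integral hint_left
    tendsto_neg_atTop_atBot tendsto_id) hbound⟩

end WeightedPoincare

section Tilted

variable {R : ℝ → ℝ} {μ : Measure ℝ}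

lemma exists_deriv_eq_zero_of_integrable_exp_neg (hR : Differentiable ℝ R)
    (hint : Integrable fun z => Real.exp (-R z)) : ∃ z, deriv R z = 0 := by
  obtain ⟨z, hz⟩ := exists_hasDerivAt_eq_zero_of_integrable
    (fun z => (hR z).hasDerivAt.neg.exp) hint
  exact ⟨z, by simpa using hz⟩

theorem integrable_sq_and_integral_sq_le_of_tilted {g : ℝ → ℝ} {z₀ : ℝ} (hR : Differentiable ℝ R)
    (hR'' : ∀ z, 0 < deriv (deriv R) z) (hint : Integrable fun z => Real.exp (-R z))
    (hμ : μ = volume.tilted fun z => -R z) (hR₀ : deriv R z₀ = 0)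
    (hg : Differentiable ℝ g) (hg₀ : g z₀ = 0)
    (hgd : Integrable (fun z => deriv g z ^ 2 / deriv (deriv R) z) μ) :
    Integrable (fun z => g z ^ 2) μ ∧
      ∫ z, g z ^ 2 ∂μ ≤ ∫ z, deriv g z ^ 2 / deriv (deriv R) z ∂μ := by
  subst hμ
  have hexp : ∀ z, HasDerivAt (fun z => Real.exp (-R z)) (-(deriv R z * Real.exp (-R z))) z :=
    fun z => (hR z).hasDerivAt.neg.exp.congr_deriv (by simp only [Pi.neg_apply]; ring)
  rw [integrable_tilted_iff hint] at hgd
  obtain ⟨hg_int, hg_le⟩ := integrable_mul_sq_and_integral_mul_sq_le hexp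
    (fun z => (Real.exp_pos _).le)
    (fun z => (differentiableAt_of_deriv_ne_zero (hR'' z).ne').hasDerivAt) hR''
    (fun z => (hg z).hasDerivAt) hR₀ hg₀ hgd
  refine ⟨(integrable_tilted_iff hint _).2 hg_int, ?_⟩
  simp only [integral_tilted, smul_eq_mul, div_mul_eq_mul_div, integral_div]
  exact div_le_div_of_nonneg_right hg_le (integral_exp_pos hint).le

theorem brascamp_lieb_one_dim_general {f : ℝ → ℝ} (hR : Differentiable ℝ R)
    (hR'' : ∀ z, 0 < deriv (deriv R) z) (hint : Integrable fun z => Real.exp (-R z))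
    (hμ : μ = volume.tilted fun z => -R z) (hf : Differentiable ℝ f)
    (hfd : Integrable (fun z => deriv f z ^ 2 / deriv (deriv R) z) μ) :
    MemLp f 2 μ ∧
      (∫ z, f z ^ 2 ∂μ) - (∫ z, f z ∂μ) ^ 2 ≤ ∫ z, deriv f z ^ 2 / deriv (deriv R) z ∂μ := by
  have : IsProbabilityMeasure μ := hμ ▸ isProbabilityMeasure_tilted hint
  obtain ⟨z₀, hR₀⟩ := exists_deriv_eq_zero_of_integrable_exp_neg hR hint
  have hg : Differentiable ℝ fun z => f z - f z₀ := hf.sub_const _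
  obtain ⟨hg_sq, hg_le⟩ := integrable_sq_and_integral_sq_le_of_tilted hR hR'' hint hμ hR₀ hg
    (sub_self _) (by simpa only [deriv_sub_const] using hfd)
  have hg_mem : MemLp (fun z => f z - f z₀) 2 μ :=
    (memLp_two_iff_integrable_sq hg.continuous.aestronglyMeasurable).2 hg_sq
  have hf_mem : MemLp f 2 μ := by
    simpa [Pi.add_def] using hg_mem.add (memLp_const (f z₀))
  refine ⟨hf_mem, ?_⟩
  calc (∫ z, f z ^ 2 ∂μ) - (∫ z, f z ∂μ) ^ 2
    _ = Var[f; μ] := (variance_eq_sub hf_mem).symm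
    _ = Var[fun z => f z - f z₀; μ] :=
      (variance_sub_const hf.continuous.aestronglyMeasurable _).symm
    _ ≤ ∫ z, (f z - f z₀) ^ 2 ∂μ :=
      variance_le_expectation_sq hg.continuous.aestronglyMeasurable
    _ ≤ ∫ z, deriv f z ^ 2 / deriv (deriv R) z ∂μ := by
      simpa only [deriv_sub_const] using hg_le

end Tilted

/-- One-dimensional Brascamp–Lieb (weighted Poincaré) inequality: if `μ` is the
probability measure with density proportional to `e^{-R}` for a smooth strictly
convex potential `R`, then for every continuously differentiable `f`,
`Var_μ(f) ≤ ∫ (f′)²/R″ dμ`. -/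
theorem brascamp_lieb_one_dim (R : ℝ → ℝ) (hR : ContDiff ℝ 2 R)
    (hR'' : ∀ z, 0 < deriv (deriv R) z)
    (hint : Integrable fun z => Real.exp (-R z))
    (μ : Measure ℝ)
    (hμ : μ = volume.withDensity
      (fun z => ENNReal.ofReal (Real.exp (-R z) / ∫ t, Real.exp (-R t))))
    (f : ℝ → ℝ) (hf : ContDiff ℝ 1 f)
    (hf2 : Integrable (fun z => (f z) ^ 2) μ)
    (hfd : Integrable (fun z => (deriv f z) ^ 2 / deriv (deriv R) z) μ) :
    (∫ z, (f z) ^ 2 ∂μ) - (∫ z, f z ∂μ) ^ 2 ≤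
      ∫ z, (deriv f z) ^ 2 / deriv (deriv R) z ∂μ := by
  exact (brascamp_lieb_one_dim_general (hR.differentiable two_ne_zero) hR'' hint hμ
    (hf.differentiable one_ne_zero) hfd).2
end

section
/- Let Z be a Gaussian random variable with mean μ and variance σ² > 0, and let S ⊆ ℝ be an interval with P(Z ∈ S) > 0. Then the conditional variance of Z given Z ∈ S is at most σ²: Var(Z | Z ∈ S) ≤ σ². -/
open MeasureTheory ProbabilityTheory

/-!
Let `φ` be the density of `N(m, v)`, so that `v φ'(x) = -(x - m) φ(x)`. Integrating the derivative
of `-v (x - c) φ(x)` over `[a, b]` shows that the integral of `(x - c) (x - m) - v` against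
`φ(x) dx` is `-v ((b - c) φ(b) + (c - a) φ(a))`, which is nonpositive as soon as `a ≤ c ≤ b`. By
exhaustion, `E[(Z - c) (Z - m) | Z ∈ S] ≤ v` for every interval `S` and every `c` in its closure.
The conditional mean is such a `c`, and for this choice the left-hand side is the conditional
variance, since `Z - c` is centred.
-/

open Filter Set
open scoped NNReal

section Intervals

lemma exists_inter_Icc_eq_Icc {α : Type*} [ConditionallyCompleteLinearOrder α] [DenselyOrdered α]
    [TopologicalSpace α] [OrderTopology α] {S : Set α} (hS : S.OrdConnected) (hSc : IsClosed S)
    {p q : α} (hne : (S ∩ Icc p q).Nonempty) : ∃ a b, S ∩ Icc p q = Icc a b :=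
  ⟨_, _, eq_Icc_of_connected_compact ⟨hne, (hS.inter ordConnected_Icc).isPreconnected⟩
    (isCompact_Icc.inter_left hSc)⟩

lemma setIntegral_nonpos_of_forall_Icc {μ : Measure ℝ} {f : ℝ → ℝ} {S : Set ℝ} {c : ℝ}
    (hS : S.OrdConnected) (hSc : IsClosed S) (hcS : c ∈ S) (hf : IntegrableOn f S μ)
    (hIcc : ∀ a b, c ∈ Icc a b → ∫ x in Icc a b, f x ∂μ ≤ 0) : ∫ x in S, f x ∂μ ≤ 0 := by
  have hlim : Tendsto (fun r ↦ ∫ x in Icc (-r) r, f x ∂μ.restrict S) atTop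
      (nhds (∫ x in S, f x ∂μ)) :=
    (aecover_Icc tendsto_neg_atTop_atBot tendsto_id).integral_tendsto_of_countably_generated hf
  refine le_of_tendsto hlim ?_
  filter_upwards [eventually_ge_atTop |c|] with r hr
  have hc : c ∈ S ∩ Icc (-r) r := ⟨hcS, abs_le.mp hr⟩
  obtain ⟨a, b, hab⟩ := exists_inter_Icc_eq_Icc hS hSc ⟨c, hc⟩
  rw [Measure.restrict_restrict measurableSet_Icc, inter_comm, hab]
  exact hIcc a b (hab ▸ hc)

lemma closure_ae_eq_of_convex_of_absolutelyContinuous {E : Type*} [NormedAddCommGroup E]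
    [NormedSpace ℝ E] [FiniteDimensional ℝ E] [MeasurableSpace E] [BorelSpace E]
    {μ ν : Measure E} [ν.IsAddHaarMeasure] (hμν : μ ≪ ν) {S : Set E} (hS : Convex ℝ S) :
    closure S =ᵐ[μ] S :=
  hμν.ae_le (closure_ae_eq_of_null_frontier (hS.addHaar_frontier ν))

end Intervals

section Moments

variable {Ω : Type*} [MeasurableSpace Ω] {μ : Measure Ω}

lemma integral_cond_eq_inv_smul_setIntegral {E : Type*} [NormedAddCommGroup E] [NormedSpace ℝ E]
    (s : Set Ω) (f : Ω → E) : ∫ ω, f ω ∂μ[|s] = (μ.real s)⁻¹ • ∫ ω in s, f ω ∂μ := by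
  rw [ProbabilityTheory.cond, integral_smul_measure, ENNReal.toReal_inv, measureReal_def]

lemma memLp_cond {E : Type*} [NormedAddCommGroup E] {p : ENNReal} {f : Ω → E} (hf : MemLp f p μ)
    {s : Set Ω} (hs : μ s ≠ 0) : MemLp f p (μ[|s]) :=
  (hf.restrict s).smul_measure (ENNReal.inv_ne_top.2 hs)

lemma integrable_sub_const_mul_sub_const [IsFiniteMeasure μ] {X Y : Ω → ℝ} (hX : MemLp X 2 μ)
    (hY : MemLp Y 2 μ) (a b : ℝ) : Integrable (fun ω ↦ (X ω - a) * (Y ω - b)) μ :=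
  (hX.sub (memLp_const a)).integrable_mul (hY.sub (memLp_const b))

lemma variance_eq_integral_sub_mean_mul_sub_const [IsProbabilityMeasure μ] {X : Ω → ℝ}
    (hX : MemLp X 2 μ) (a : ℝ) :
    variance X μ = ∫ ω, (X ω - ∫ ω', X ω' ∂μ) * (X ω - a) ∂μ := by
  set c := ∫ ω, X ω ∂μ
  have hint : Integrable X μ := hX.integrable one_le_two
  have hcentred : ∫ ω, (X ω - c) ∂μ = 0 := by
    rw [integral_sub hint (integrable_const c), integral_const, probReal_univ, one_smul, sub_self]
  have hsq : Integrable (fun ω ↦ (X ω - c) ^ 2) μ := (hX.sub (memLp_const c)).integrable_sq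
  have hlin : Integrable (fun ω ↦ (c - a) * (X ω - c)) μ :=
    (hint.sub (integrable_const c)).const_mul (c - a)
  calc variance X μ
      = ∫ ω, (X ω - c) ^ 2 ∂μ + (c - a) * ∫ ω, (X ω - c) ∂μ := by
        rw [hcentred, mul_zero, add_zero, variance_eq_integral hX.aemeasurable]
    _ = ∫ ω, ((X ω - c) ^ 2 + (c - a) * (X ω - c)) ∂μ := by
        rw [integral_add hsq hlin, integral_const_mul]
    _ = ∫ ω, (X ω - c) * (X ω - a) ∂μ := by
        congr with ω
        ring

end Moments

section Gaussian

variable (m : ℝ) {v : ℝ≥0}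

lemma continuous_gaussianPDFReal (v : ℝ≥0) : Continuous (gaussianPDFReal m v) := by
  rw [gaussianPDFReal_def]
  fun_prop

lemma hasDerivAt_gaussianPDFReal (v : ℝ≥0) (x : ℝ) :
    HasDerivAt (gaussianPDFReal m v) (-((x - m) / v) * gaussianPDFReal m v x) x := by
  have hexponent : HasDerivAt (fun y ↦ -(y - m) ^ 2 / (2 * v)) (-((x - m) / v)) x := by
    refine ((((hasDerivAt_id' x).sub_const m).fun_pow 2).fun_neg.div_const
      (2 * (v : ℝ))).congr_deriv ?_
    push_cast
    ring
  rw [gaussianPDFReal_def]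
  exact (hexponent.exp.const_mul (√(2 * Real.pi * v))⁻¹).congr_deriv (by ring)

lemma setIntegral_gaussianReal_eq_setIntegral_smul {E : Type*} [NormedAddCommGroup E]
    [NormedSpace ℝ E] (hv : v ≠ 0) {s : Set ℝ} (hs : MeasurableSet s) (f : ℝ → E) :
    ∫ x in s, f x ∂gaussianReal m v = ∫ x in s, gaussianPDFReal m v x • f x := by
  simp only [gaussianReal_of_var_ne_zero m hv,
    setIntegral_withDensity_eq_setIntegral_toReal_smul (measurable_gaussianPDF m v)
      (ae_of_all _ fun _ ↦ gaussianPDF_lt_top) f hs, toReal_gaussianPDF]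

/-- Stein's identity, with the boundary terms that appear on a bounded interval. -/
lemma setIntegral_Icc_mul_sub_mean_sub_deriv_gaussianReal (hv : v ≠ 0) {f f' : ℝ → ℝ} {a b : ℝ}
    (hab : a ≤ b) (hf : ∀ x ∈ Icc a b, HasDerivAt f (f' x) x)
    (hf' : IntervalIntegrable f' volume a b) :
    ∫ x in Icc a b, (f x * (x - m) - v * f' x) ∂gaussianReal m v =
      v * (f a * gaussianPDFReal m v a - f b * gaussianPDFReal m v b) := by
  have hv' : (v : ℝ) ≠ 0 := mod_cast hv
  have hint : IntervalIntegrable (fun x ↦ gaussianPDFReal m v x * (f x * (x - m) - v * f' x))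
      volume a b := by
    have hfc : ContinuousOn f (Icc a b) := fun x hx ↦ (hf x hx).continuousAt.continuousWithinAt
    have hleft : ContinuousOn (fun x ↦ f x * (x - m)) (Icc a b) := by fun_prop
    exact ((hleft.intervalIntegrable_of_Icc hab).sub (hf'.const_mul v)).continuousOn_mul
      (continuous_gaussianPDFReal m v).continuousOn
  have hderiv : ∀ x ∈ Icc a b, HasDerivAt (fun y ↦ -v * (f y * gaussianPDFReal m v y))
      (gaussianPDFReal m v x * (f x * (x - m) - v * f' x)) x := fun x hx ↦ by
    refine (((hf x hx).fun_mul (hasDerivAt_gaussianPDFReal m v x)).const_mul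
      (-v : ℝ)).congr_deriv ?_
    field_simp
    ring
  simp only [setIntegral_gaussianReal_eq_setIntegral_smul m hv measurableSet_Icc, smul_eq_mul]
  rw [integral_Icc_eq_integral_Ioc, ← intervalIntegral.integral_of_le hab,
    intervalIntegral.integral_eq_sub_of_hasDerivAt (uIcc_of_le hab ▸ hderiv) hint]
  ring

lemma setIntegral_Icc_sub_mul_sub_mean_sub_var_gaussianReal_nonpos (hv : v ≠ 0) {a b c : ℝ}
    (hc : c ∈ Icc a b) :
    ∫ x in Icc a b, ((x - c) * (x - m) - v) ∂gaussianReal m v ≤ 0 := by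
  have hstein := setIntegral_Icc_mul_sub_mean_sub_deriv_gaussianReal m hv (hc.1.trans hc.2)
    (fun x _ ↦ (hasDerivAt_id' x).sub_const c) intervalIntegrable_const
  simp only [mul_one] at hstein
  rw [hstein]
  have ha : (a - c) * gaussianPDFReal m v a ≤ 0 :=
    mul_nonpos_of_nonpos_of_nonneg (sub_nonpos.2 hc.1) (gaussianPDFReal_nonneg m v a)
  have hb : 0 ≤ (b - c) * gaussianPDFReal m v b :=
    mul_nonneg (sub_nonneg.2 hc.2) (gaussianPDFReal_nonneg m v b)
  exact mul_nonpos_of_nonneg_of_nonpos v.coe_nonneg (by linarith)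

lemma setIntegral_sub_mul_sub_mean_gaussianReal_le (hv : v ≠ 0) {S : Set ℝ} (hS : Convex ℝ S)
    {c : ℝ} (hc : c ∈ closure S) :
    ∫ x in S, (x - c) * (x - m) ∂gaussianReal m v ≤ (gaussianReal m v).real S * v := by
  have hac := gaussianReal_absolutelyContinuous m hv
  have hid : MemLp (fun x ↦ x) 2 (gaussianReal m v) := memLp_id_gaussianReal 2
  have hint := integrable_sub_const_mul_sub_const hid hid c m
  have hnonpos : ∫ x in closure S, ((x - c) * (x - m) - v) ∂gaussianReal m v ≤ 0 :=
    setIntegral_nonpos_of_forall_Icc hS.closure.ordConnected isClosed_closure hc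
      (hint.sub (integrable_const _)).integrableOn
      fun _ _ ↦ setIntegral_Icc_sub_mul_sub_mean_sub_var_gaussianReal_nonpos m hv
  rw [setIntegral_congr_set (closure_ae_eq_of_convex_of_absolutelyContinuous hac hS),
    integral_sub hint.integrableOn (integrable_const _), setIntegral_const, smul_eq_mul] at hnonpos
  linarith

end Gaussian

/-- Truncating a Gaussian to an interval never increases its variance: if
`Z ∼ N(m, v)` with `v > 0` and `S` is an interval (a convex subset of `ℝ`) with
`P(Z ∈ S) > 0`, then `Var(Z | Z ∈ S) ≤ v`. -/
theorem truncated_gaussian_variance_le (m : ℝ) (v : NNReal) (hv : 0 < v)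
    (S : Set ℝ) (hS : Convex ℝ S) (hSm : MeasurableSet S)
    (hpos : 0 < gaussianReal m v S) :
    variance id ((gaussianReal m v)[|S]) ≤ (v : ℝ) := by
  have hprob : IsProbabilityMeasure ((gaussianReal m v)[|S]) :=
    cond_isProbabilityMeasure hpos.ne'
  have hL2 : MemLp id 2 ((gaussianReal m v)[|S]) :=
    memLp_cond (memLp_id_gaussianReal 2) hpos.ne'
  set c := ∫ x, id x ∂(gaussianReal m v)[|S]
  have hcS : c ∈ closure S := hS.closure.integral_mem isClosed_closure
    ((ae_cond_mem hSm).mono fun _ hx ↦ subset_closure hx) (hL2.integrable one_le_two)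
  calc variance id ((gaussianReal m v)[|S])
      = ∫ x, (x - c) * (x - m) ∂(gaussianReal m v)[|S] :=
        variance_eq_integral_sub_mean_mul_sub_const hL2 m
    _ = ((gaussianReal m v).real S)⁻¹ * ∫ x in S, (x - c) * (x - m) ∂gaussianReal m v :=
        integral_cond_eq_inv_smul_setIntegral S _
    _ ≤ v := inv_mul_le_of_le_mul₀ measureReal_nonneg v.coe_nonneg
        (setIntegral_sub_mul_sub_mean_gaussianReal_le m hv.ne' hS hcS)
end

section
/- Let X ∈ ℝ^{n×p} have full column rank, let W₀ = diag(w_1, …, w_n) with 0 ≤ w_i ≤ 1 for all i, and let κ > 1. Set G = XᵀX and M = I_p − κ^{-1} G^{-1} Xᵀ W₀ X. Then M is similar to the symmetric matrix I_p − κ^{-1} G^{-1/2} Xᵀ W₀ X G^{-1/2}, all eigenvalues of M are real, and every eigenvalue of M lies in the interval [1 − 1/κ, 1] ⊆ (0, 1]. -/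
open Matrix

/-!
Write `0 ≤ A ≤ G` in the Loewner order, with `A = XᵀWX` and `G = XᵀX = Q²`. Conjugating by `Q⁻¹`
gives `0 ≤ Q⁻¹AQ⁻¹ ≤ 1`, so `S = 1 - κ⁻¹ Q⁻¹AQ⁻¹` satisfies `1 - κ⁻¹ ≤ S ≤ 1`, which confines its
real spectrum. Since `M = Q⁻¹SQ` shares the characteristic polynomial of the symmetric matrix `S`,
which splits over `ℝ`, passing to `ℂ` creates no new eigenvalues.
-/

section

open scoped MatrixOrder ComplexOrder

theorem spectrum_map_conj_eq_image_of_splits {K L n : Type*} [Field K] [Field L] [Algebra K L]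
    [Fintype n] [DecidableEq n] {S Q : Matrix n n K} (hS : S.charpoly.Splits) (hQ : IsUnit Q) :
    spectrum L ((Q⁻¹ * S * Q).map (algebraMap K L)) = algebraMap K L '' spectrum K S := by
  have hcharpoly : ((Q⁻¹ * S * Q).map (algebraMap K L)).charpoly =
      S.charpoly.map (algebraMap K L) := by
    rw [charpoly_map, ← hQ.unit_spec, charpoly_units_conj']
  ext μ
  rw [mem_spectrum_iff_isRoot_charpoly, hcharpoly]
  constructor
  · intro hμ
    obtain ⟨r, rfl⟩ := hS.mem_range_of_isRoot S.charpoly_monic.ne_zero hμ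
    exact ⟨r, mem_spectrum_iff_isRoot_charpoly.mpr
      (hμ.of_map (algebraMap K L).injective), rfl⟩
  · rintro ⟨r, hr, rfl⟩
    exact (mem_spectrum_iff_isRoot_charpoly.mp hr).map

theorem one_sub_smul_inv_mul_eq_conj {R n : Type*} [CommRing R] [Fintype n] [DecidableEq n]
    (c : R) {Q : Matrix n n R} (hQ : IsUnit Q) (A : Matrix n n R) :
    1 - c • ((Q * Q)⁻¹ * A) = Q⁻¹ * (1 - c • (Q⁻¹ * A * Q⁻¹)) * Q := by
  have hinv : Q⁻¹ * Q = 1 := nonsing_inv_mul Q ((isUnit_iff_isUnit_det Q).mp hQ)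
  rw [Matrix.mul_inv_rev, Matrix.mul_sub, Matrix.sub_mul, Matrix.mul_one, hinv,
    Matrix.mul_smul, Matrix.smul_mul]
  simp only [Matrix.mul_assoc, hinv, Matrix.mul_one]

theorem spectrum_one_sub_smul_subset_Icc {A : Type*} [Ring A] [StarRing A] [PartialOrder A]
    [StarOrderedRing A] [TopologicalSpace A] [Algebra ℝ A] [StarModule ℝ A]
    [ContinuousFunctionalCalculus ℝ A IsSelfAdjoint] [NonnegSpectrumClass ℝ A]
    {a : A} (ha₀ : 0 ≤ a) (ha₁ : a ≤ 1) {c : ℝ} (hc : 0 ≤ c) :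
    spectrum ℝ (1 - c • a) ⊆ Set.Icc (1 - c) 1 := by
  have hsa : IsSelfAdjoint (1 - c • a) :=
    (IsSelfAdjoint.one A).sub ((IsSelfAdjoint.all c).smul (.of_nonneg ha₀))
  have hlower : algebraMap ℝ A (1 - c) ≤ 1 - c • a := by
    rw [map_sub, map_one, Algebra.algebraMap_eq_smul_one]
    gcongr
  have hupper : 1 - c • a ≤ algebraMap ℝ A 1 := by
    rw [map_one]
    exact sub_le_self 1 (smul_nonneg hc ha₀)
  exact fun x hx ↦ ⟨(algebraMap_le_iff_le_spectrum hsa).mp hlower x hx,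
    (le_algebraMap_iff_spectrum_le hsa).mp hupper x hx⟩

theorem inv_mul_mul_inv_mem_Icc {𝕜 n : Type*} [RCLike 𝕜] [Fintype n] [DecidableEq n]
    {A Q : Matrix n n 𝕜} (hQ : Q.PosDef) (hA : A ∈ Set.Icc 0 (Q * Q)) :
    Q⁻¹ * A * Q⁻¹ ∈ Set.Icc 0 1 := by
  have hQinv : 0 ≤ Q⁻¹ := hQ.inv.posSemidef.nonneg
  have hdet : IsUnit Q.det := (isUnit_iff_isUnit_det Q).mp hQ.isUnit
  have hnonneg := conjugate_le_conjugate_of_nonneg hA.1 hQinv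
  have hle := conjugate_le_conjugate_of_nonneg hA.2 hQinv
  rw [mul_zero, zero_mul] at hnonneg
  rw [nonsing_inv_mul_cancel_left _ _ hdet, mul_nonsing_inv _ hdet] at hle
  exact ⟨hnonneg, hle⟩

theorem conjTranspose_mul_mul_mono {𝕜 m n : Type*} [RCLike 𝕜] [Fintype m] [Finite n]
    (X : Matrix m n 𝕜) : Monotone fun W : Matrix m m 𝕜 ↦ Xᴴ * W * X := fun V W h ↦ by
  rw [Matrix.le_iff, ← Matrix.sub_mul, ← Matrix.mul_sub]
  exact (Matrix.le_iff.mp h).conjTranspose_mul_mul_same X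

theorem diagonal_mem_Icc {𝕜 n : Type*} [RCLike 𝕜] [DecidableEq n] {w : n → 𝕜}
    (hw : ∀ i, w i ∈ Set.Icc 0 1) : diagonal w ∈ Set.Icc 0 1 := by
  refine ⟨(PosSemidef.diagonal fun i ↦ (hw i).1).nonneg, ?_⟩
  rw [Matrix.le_iff, ← diagonal_one, diagonal_sub]
  exact PosSemidef.diagonal fun i ↦ sub_nonneg.mpr (hw i).2

theorem mulVec_injective_of_rank_eq_card {K m n : Type*} [Field K] [Fintype n]
    {X : Matrix m n K} (hX : X.rank = Fintype.card n) : Function.Injective X.mulVec := by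
  rw [mulVec_injective_iff, linearIndependent_iff_card_eq_finrank_span, ← hX,
    rank_eq_finrank_span_cols]
  rfl

theorem avb_map_is_contraction_general {m n : Type*} [Fintype m] [DecidableEq m] [Fintype n]
    [DecidableEq n] (X : Matrix m n ℝ) (hX : X.rank = Fintype.card n)
    (W : Matrix m m ℝ) (hW : W ∈ Set.Icc 0 1) (κ : ℝ) (hκ : 0 < κ) :
    (∃ Q : Matrix n n ℝ, Q.PosDef ∧ Q.IsSymm ∧ Q * Q = Xᵀ * X ∧
      (1 - κ⁻¹ • (Q⁻¹ * (Xᵀ * W * X) * Q⁻¹)).IsSymm ∧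
      1 - κ⁻¹ • ((Xᵀ * X)⁻¹ * (Xᵀ * W * X)) =
        Q⁻¹ * (1 - κ⁻¹ • (Q⁻¹ * (Xᵀ * W * X) * Q⁻¹)) * Q) ∧
    ∀ μ ∈ spectrum ℂ ((1 - κ⁻¹ • ((Xᵀ * X)⁻¹ * (Xᵀ * W * X))).map (algebraMap ℝ ℂ)),
      μ.im = 0 ∧ μ.re ∈ Set.Icc (1 - 1 / κ) 1 := by
  simp only [← conjTranspose_eq_transpose_of_trivial, IsSymm]
  have hG : (Xᴴ * X).PosDef := .conjTranspose_mul_self X (mulVec_injective_of_rank_eq_card hX)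
  have hA : Xᴴ * W * X ∈ Set.Icc 0 (Xᴴ * X) := by
    simpa using (conjTranspose_mul_mul_mono X).mapsTo_Icc hW
  obtain ⟨Q, hQ, hQG⟩ :=
    CStarAlgebra.isStrictlyPositive_iff_exists_isStrictlyPositive_and_eq_mul_self.mp
      hG.isStrictlyPositive
  rw [hQG] at hA ⊢
  have hB := inv_mul_mul_inv_mem_Icc hQ.posDef hA
  have hS : (1 - κ⁻¹ • (Q⁻¹ * (Xᴴ * W * X) * Q⁻¹)).IsHermitian :=
    (IsSelfAdjoint.one _).sub ((IsSelfAdjoint.all κ⁻¹).smul (.of_nonneg hB.1))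
  have hsim := one_sub_smul_inv_mul_eq_conj κ⁻¹ hQ.isUnit (Xᴴ * W * X)
  refine ⟨⟨Q, hQ.posDef, hQ.posDef.isHermitian, rfl, hS, hsim⟩, ?_⟩
  rw [hsim, spectrum_map_conj_eq_image_of_splits hS.splits_charpoly hQ.isUnit, one_div]
  rintro _ ⟨r, hr, rfl⟩
  exact ⟨Complex.ofReal_im r,
    spectrum_one_sub_smul_subset_Icc hB.1 hB.2 (inv_nonneg.mpr hκ.le) hr⟩

end

/-- Spectral contraction of the local AVB-to-VB map: with `G = XᵀX` positive
definite (full column rank `X`), `W₀ = diag(w)` with weights in `[0,1]` and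
`κ > 1`, the matrix `M = I − κ⁻¹ G⁻¹ Xᵀ W₀ X` is similar (via the symmetric
positive-definite square root `Q` of `G`) to the symmetric matrix
`I − κ⁻¹ Q⁻¹ Xᵀ W₀ X Q⁻¹`, all its (complex) eigenvalues are real, and every
eigenvalue lies in `[1 − 1/κ, 1] ⊆ (0, 1]`. -/
theorem avb_map_is_contraction (n p : ℕ) (X : Matrix (Fin n) (Fin p) ℝ)
    (hX : X.rank = p)
    (w : Fin n → ℝ) (hw : ∀ i, w i ∈ Set.Icc (0 : ℝ) 1)
    (W₀ : Matrix (Fin n) (Fin n) ℝ) (hW₀ : W₀ = Matrix.diagonal w)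
    (κ : ℝ) (hκ : 1 < κ)
    (G : Matrix (Fin p) (Fin p) ℝ) (hG : G = Xᵀ * X)
    (M : Matrix (Fin p) (Fin p) ℝ)
    (hM : M = 1 - κ⁻¹ • (G⁻¹ * (Xᵀ * W₀ * X))) :
    (∃ Q : Matrix (Fin p) (Fin p) ℝ, Q.PosDef ∧ Q.IsSymm ∧ Q * Q = G ∧
      (1 - κ⁻¹ • (Q⁻¹ * (Xᵀ * W₀ * X) * Q⁻¹)).IsSymm ∧
      M = Q⁻¹ * (1 - κ⁻¹ • (Q⁻¹ * (Xᵀ * W₀ * X) * Q⁻¹)) * Q) ∧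
    (∀ μ ∈ spectrum ℂ (M.map (algebraMap ℝ ℂ)),
      μ.im = 0 ∧ μ.re ∈ Set.Icc (1 - 1 / κ) 1) ∧
    Set.Icc (1 - 1 / κ) (1 : ℝ) ⊆ Set.Ioc (0 : ℝ) 1 := by
  subst hW₀ hG hM
  have hκ₀ : 0 < κ := zero_lt_one.trans hκ
  obtain ⟨hsim, hspec⟩ :=
    avb_map_is_contraction_general X (by simpa using hX) (diagonal w) (diagonal_mem_Icc hw) κ hκ₀
  exact ⟨hsim, hspec, Set.Icc_subset_Ioc (sub_pos.mpr ((div_lt_one hκ₀).mpr hκ)) le_rfl⟩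
end

section
/- Let y_L ∈ ℝ, y ∈ ℝ^n, and let N = { i : y_i > y_L } and C = { i : y_i = y_L } partition {1, …, n} (assume y_i ≥ y_L for all i). Let X ∈ ℝ^{n×p} with rows x_iᵀ be such that Xᵀι = 0 and (ι : X) has full column rank, and let g > 0. Assume |N| ≥ 2 and that the uncensored values (y_i)_{i∈N} are not all equal. Then the Tobit marginal likelihood is finite: ∫_0^∞ ∫_{ℝ^p} ∫_ℝ ∫_{(−∞, y_L]^{|C|}} ∏_{i∈N} (2πσ²)^{−1/2} exp( −(y_i − α − x_iᵀβ)²/(2σ²) ) · ∏_{i∈C} (2πσ²)^{−1/2} exp( −(z_i − α − x_iᵀβ)²/(2σ²) ) · N_p(β; 0, g σ² (XᵀX)^{-1}) · σ^{-2} dz_C dα dβ d(σ²) < ∞, where z_C = (z_i)_{i∈C}. -/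
open MeasureTheory Matrix Real

/-- univariate Gaussian density with variance `s` evaluated at `t`. -/
noncomputable def nd (s t : ℝ) : ℝ :=
  (2 * Real.pi * s) ^ (-(1 : ℝ) / 2) * Real.exp (-t ^ 2 / (2 * s))

/-! Two distinct uncensored responses already control everything: completing the square in `α` in
their contribution to the residual sum of squares leaves a multiple of `(d - v ⬝ᵥ β) ^ 2` with
`d ≠ 0`, which cannot be small together with the quadratic form of the prior. Hence the exponent
dominates a positive constant plus Gaussian exponents in `α` and `β`. The censored factors integrate
to at most one, the Gaussians to exactly one, and what is left in `s = σ²` is an unnormalised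
inverse-gamma density, where the constant supplies the decay as `s → 0`. -/

section LinearAlgebra

open scoped MatrixOrder in
lemma exists_pos_mul_dotProduct_self_le {ι : Type*} [Fintype ι] {P : Matrix ι ι ℝ}
    (hP : P.PosDef) : ∃ r > 0, ∀ x : ι → ℝ, r * (x ⬝ᵥ x) ≤ x ⬝ᵥ (P *ᵥ x) := by
  classical
  rcases isEmpty_or_nonempty ι with _ | _
  · exact ⟨1, one_pos, fun x => by simp⟩
  obtain ⟨r, hr, hrP⟩ : ∃ r > 0, algebraMap ℝ (Matrix ι ι ℝ) r ≤ P :=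
    (CFC.exists_pos_algebraMap_le_iff hP.isHermitian).2 fun _ hx =>
      hP.isStrictlyPositive.spectrum_pos hx
  refine ⟨r, hr, fun x => ?_⟩
  have hnonneg := (Matrix.le_iff.1 hrP).dotProduct_mulVec_nonneg x
  simpa [Algebra.algebraMap_eq_smul_one, Matrix.sub_mulVec, Matrix.smul_mulVec, dotProduct_sub]
    using hnonneg

lemma linearIndependent_col_of_rank_eq_card {m n K : Type*} [Fintype n] [Field K]
    {A : Matrix m n K} (h : A.rank = Fintype.card n) : LinearIndependent K A.col :=
  linearIndependent_iff_card_eq_finrank_span.2 (h.symm.trans A.rank_eq_finrank_span_cols)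

lemma posDef_transpose_mul_self_of_rank_cons {m : Type*} [Fintype m] {p : ℕ} {c : m → ℝ}
    {X : Matrix m (Fin p) ℝ}
    (h : (Matrix.of fun i => Fin.cons (c i) (fun j => X i j) : Matrix m (Fin (p + 1)) ℝ).rank =
      p + 1) : (Xᵀ * X).PosDef := by
  have hcols := linearIndependent_col_of_rank_eq_card (h.trans (Fintype.card_fin _).symm)
  have hX : LinearIndependent ℝ X.col := hcols.comp Fin.succ (Fin.succ_injective p)
  simpa only [conjTranspose_eq_transpose_of_trivial] using
    Matrix.PosDef.conjTranspose_mul_self X (Matrix.mulVec_injective_iff.2 hX)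

end LinearAlgebra

section Densities

variable {ι : Type*} [Fintype ι] {s : ℝ}

lemma nd_nonneg (hs : 0 ≤ s) (t : ℝ) : 0 ≤ nd s t := by
  unfold nd
  positivity

lemma nd_sub_eq_gaussianPDFReal (hs : 0 ≤ s) (m x : ℝ) :
    nd s (x - m) = ProbabilityTheory.gaussianPDFReal m s.toNNReal x := by
  rw [nd, ProbabilityTheory.gaussianPDFReal, Real.coe_toNNReal s hs, Real.sqrt_eq_rpow,
    ← Real.rpow_neg (by positivity), neg_div]

lemma lintegral_nd_sub (hs : 0 < s) (m : ℝ) : ∫⁻ x, ENNReal.ofReal (nd s (x - m)) = 1 := by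
  simp only [nd_sub_eq_gaussianPDFReal hs.le]
  exact ProbabilityTheory.lintegral_gaussianPDFReal_eq_one m (Real.toNNReal_pos.2 hs).ne'

lemma lintegral_prod_nd_sub (hs : 0 < s) (m : ι → ℝ) :
    ∫⁻ x : ι → ℝ, ENNReal.ofReal (∏ i, nd s (x i - m i)) = 1 := by
  have hv : s.toNNReal ≠ 0 := (Real.toNNReal_pos.2 hs).ne'
  simp only [nd_sub_eq_gaussianPDFReal hs.le]
  rw [← ofReal_integral_eq_lintegral_ofReal, integral_fintype_prod_volume_eq_prod
      fun i => ProbabilityTheory.gaussianPDFReal (m i) s.toNNReal]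
  · simp only [ProbabilityTheory.integral_gaussianPDFReal_eq_one _ hv, Finset.prod_const_one,
      ENNReal.ofReal_one]
  · exact Integrable.fintype_prod fun i =>
      ProbabilityTheory.integrable_gaussianPDFReal (m i) s.toNNReal
  · exact ae_of_all _ fun x => Finset.prod_nonneg fun i _ =>
      ProbabilityTheory.gaussianPDFReal_nonneg _ _ _

lemma setLIntegral_mul_prod_nd_sub_le (hs : 0 < s) (S : Set (ι → ℝ)) (m : ι → ℝ) {a : ℝ}
    (ha : 0 ≤ a) : ∫⁻ z in S, ENNReal.ofReal (a * ∏ i, nd s (z i - m i)) ≤ ENNReal.ofReal a := by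
  simp only [ENNReal.ofReal_mul ha]
  rw [lintegral_const_mul' _ _ ENNReal.ofReal_ne_top]
  refine mul_le_of_le_one_right' ?_
  exact (setLIntegral_le_lintegral _ _).trans_eq (lintegral_prod_nd_sub hs m)

lemma prod_nd (hs : 0 ≤ s) (e : ι → ℝ) :
    ∏ i, nd s (e i) =
      (2 * π * s) ^ (-(Fintype.card ι : ℝ) / 2) * Real.exp (-(∑ i, e i ^ 2) / (2 * s)) := by
  simp only [nd, Finset.prod_mul_distrib, Finset.prod_const, Finset.card_univ, ← Real.exp_sum,
    ← Finset.sum_div, Finset.sum_neg_distrib]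
  rw [← Real.rpow_mul_natCast (by positivity)]
  ring_nf

lemma gaussPdf_zero_smul {p : ℕ} (hs : 0 < s) {V : Matrix (Fin p) (Fin p) ℝ} (hV : V.PosDef)
    (β : Fin p → ℝ) :
    gaussPdf 0 (s • V) β = V.det ^ (-(1 : ℝ) / 2) * (2 * π * s) ^ (-(p : ℝ) / 2) *
      Real.exp (-(β ⬝ᵥ (V⁻¹ *ᵥ β)) / (2 * s)) := by
  have hinv : (s • V)⁻¹ = s⁻¹ • V⁻¹ := by
    simpa [Units.smul_def] using Matrix.inv_smul' V (Units.mk0 s hs.ne') hV.det_pos.ne'.isUnit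
  have hdet : (s • V).det ^ (-(1 : ℝ) / 2) = s ^ (-(p : ℝ) / 2) * V.det ^ (-(1 : ℝ) / 2) := by
    rw [Matrix.det_smul, Fintype.card_fin, Real.mul_rpow (by positivity) hV.det_pos.le,
      ← Real.rpow_natCast_mul hs.le]
    ring_nf
  rw [gaussPdf, hinv, hdet, sub_zero, Matrix.smul_mulVec, dotProduct_smul, smul_eq_mul,
    Real.mul_rpow (by positivity) hs.le]
  field_simp

lemma integrableOn_rpow_mul_exp_neg_div {r c : ℝ} (hr : 0 < r) (hc : 0 < c) :
    IntegrableOn (fun s : ℝ => s ^ (-r - 1) * Real.exp (-c / s)) (Set.Ioi 0) := by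
  have hgamma : IntegrableOn (fun t : ℝ => t ^ (r - 1) * Real.exp (-c * t ^ (1 : ℝ))) (Set.Ioi 0) :=
    integrableOn_rpow_mul_exp_neg_mul_rpow (by linarith) one_pos hc
  refine ((integrableOn_Ioi_comp_rpow_iff' _ (p := -1) (by norm_num)).2 hgamma).congr_fun
    (fun s (hs : 0 < s) => ?_) measurableSet_Ioi
  simp only [smul_eq_mul, Real.rpow_one]
  rw [← mul_assoc, ← Real.rpow_mul hs.le, ← Real.rpow_add hs, Real.rpow_neg_one]
  ring_nf

end Densities

section Regression

variable {ι : Type*} [Fintype ι] {p : ℕ}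

/-- Residual sum of squares of the linear model with intercept `α` and slopes `β`. -/
def residualSumOfSquares (y : ι → ℝ) (Z : Matrix ι (Fin p) ℝ) (β : Fin p → ℝ) (α : ℝ) : ℝ :=
  ∑ i, (y i - α - (Z *ᵥ β) i) ^ 2

/-- Unnormalised posterior density of `(σ², β, α)` given fully observed responses `y` with design
`Z`, under the prior `p(α, σ²) ∝ σ⁻²`, `β ∼ N(0, σ² V)`; the variance `σ²` is the argument `s`. -/
noncomputable def posteriorKernel (y : ι → ℝ) (Z : Matrix ι (Fin p) ℝ)
    (V : Matrix (Fin p) (Fin p) ℝ) (s : ℝ) (β : Fin p → ℝ) (α : ℝ) : ℝ :=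
  (∏ i, nd s (y i - α - (Z *ᵥ β) i)) * gaussPdf 0 (s • V) β * s⁻¹

lemma exists_pos_add_dotProduct_self_le {d r : ℝ} (hd : d ≠ 0) (hr : 0 < r) (v : ι → ℝ) :
    ∃ c > 0, ∀ β : ι → ℝ,
      c + r / 2 * (β ⬝ᵥ β) ≤ (d - v ⬝ᵥ β) ^ 2 / 2 + r * (β ⬝ᵥ β) := by
  set b : ℝ := 2 * (v ⬝ᵥ v + 1) / r with hb
  have hv : 0 ≤ v ⬝ᵥ v := by simpa using dotProduct_self_star_nonneg v
  have hb_pos : 0 < b := by positivity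
  refine ⟨d ^ 2 / (2 + b), by positivity, fun β => ?_⟩
  have hsedrakyan : d ^ 2 / (2 + b) ≤ (d - v ⬝ᵥ β) ^ 2 / 2 + (v ⬝ᵥ β) ^ 2 / b := by
    simpa [Fin.sum_univ_two] using Finset.sq_sum_div_le_sum_sq_div Finset.univ
      ![d - v ⬝ᵥ β, v ⬝ᵥ β] (g := ![2, b]) (by simp [Fin.forall_fin_two, hb_pos])
  have hcauchy : (v ⬝ᵥ β) ^ 2 / b ≤ r / 2 * (β ⬝ᵥ β) := by
    have hcs : (v ⬝ᵥ β) ^ 2 ≤ (v ⬝ᵥ v) * (β ⬝ᵥ β) := by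
      simpa only [dotProduct, sq] using Finset.sum_mul_sq_le_sq_mul_sq Finset.univ v β
    have hβ : 0 ≤ β ⬝ᵥ β := by simpa using dotProduct_self_star_nonneg β
    rw [div_le_iff₀ hb_pos, hb]
    field_simp
    linarith
  linarith

lemma sq_add_sq_sub_le_residualSumOfSquares (y : ι → ℝ) (Z : Matrix ι (Fin p) ℝ) {i j : ι}
    (hij : i ≠ j) (β : Fin p → ℝ) (α : ℝ) :
    2 * (α - ((y i - (Z *ᵥ β) i) + (y j - (Z *ᵥ β) j)) / 2) ^ 2 +
      (y i - y j - (Z i - Z j) ⬝ᵥ β) ^ 2 / 2 ≤ residualSumOfSquares y Z β α := by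
  classical
  calc _ = ∑ k ∈ {i, j}, (y k - α - (Z *ᵥ β) k) ^ 2 := by
        rw [Finset.sum_pair hij, sub_dotProduct]
        simp only [Matrix.mulVec]
        ring
    _ ≤ residualSumOfSquares y Z β α :=
        Finset.sum_le_sum_of_subset_of_nonneg (Finset.subset_univ _) fun _ _ _ => sq_nonneg _

lemma exists_le_residualSumOfSquares_add {y : ι → ℝ} (hy : ∃ i j, y i ≠ y j)
    (Z : Matrix ι (Fin p) ℝ) {P : Matrix (Fin p) (Fin p) ℝ} (hP : P.PosDef) :
    ∃ c > 0, ∃ τ > 0, ∃ μ : (Fin p → ℝ) → ℝ, ∀ β α,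
      2 * c + 2 * (α - μ β) ^ 2 + (β ⬝ᵥ β) / τ ≤
        residualSumOfSquares y Z β α + β ⬝ᵥ (P *ᵥ β) := by
  obtain ⟨i, j, hij⟩ := hy
  obtain ⟨r, hr, hrP⟩ := exists_pos_mul_dotProduct_self_le hP
  obtain ⟨c, hc, hcβ⟩ := exists_pos_add_dotProduct_self_le (sub_ne_zero.2 hij) hr (Z i - Z j)
  refine ⟨c / 2, by positivity, 2 / r, by positivity,
    fun β => ((y i - (Z *ᵥ β) i) + (y j - (Z *ᵥ β) j)) / 2, fun β α => ?_⟩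
  have hrss := sq_add_sq_sub_le_residualSumOfSquares y Z (ne_of_apply_ne y hij) β α
  have hτ : (β ⬝ᵥ β) / (2 / r) = r / 2 * (β ⬝ᵥ β) := by
    field_simp
  linarith only [hrss, hτ, hcβ β, hrP β]

lemma posteriorKernel_eq (y : ι → ℝ) (Z : Matrix ι (Fin p) ℝ) {V : Matrix (Fin p) (Fin p) ℝ}
    (hV : V.PosDef) {s : ℝ} (hs : 0 < s) (β : Fin p → ℝ) (α : ℝ) :
    posteriorKernel y Z V s β α =
      V.det ^ (-(1 : ℝ) / 2) * (2 * π * s) ^ (-(Fintype.card ι : ℝ) / 2) *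
        (2 * π * s) ^ (-(p : ℝ) / 2) * s⁻¹ *
        Real.exp (-(residualSumOfSquares y Z β α + β ⬝ᵥ (V⁻¹ *ᵥ β)) / (2 * s)) := by
  rw [posteriorKernel, prod_nd hs.le, gaussPdf_zero_smul hs hV, residualSumOfSquares, neg_add,
    add_div, Real.exp_add]
  ring

lemma posteriorKernel_nonneg (y : ι → ℝ) (Z : Matrix ι (Fin p) ℝ) {V : Matrix (Fin p) (Fin p) ℝ}
    (hV : V.PosDef) {s : ℝ} (hs : 0 < s) (β : Fin p → ℝ) (α : ℝ) :
    0 ≤ posteriorKernel y Z V s β α := by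
  have := hV.det_pos
  rw [posteriorKernel_eq y Z hV hs]
  positivity

lemma exp_eq_mul_nd_mul_prod_nd {s τ : ℝ} (hs : 0 < s) (hτ : 0 < τ) (c t : ℝ) (β : ι → ℝ) :
    Real.exp (-(2 * c + 2 * t ^ 2 + (β ⬝ᵥ β) / τ) / (2 * s)) =
      Real.exp (-c / s) * ((π * s) ^ ((1 : ℝ) / 2) * nd (s / 2) t) *
        ((τ * (2 * π * s)) ^ ((Fintype.card ι : ℝ) / 2) * ∏ j, nd (τ * s) (β j)) := by
  have hnd : (π * s) ^ ((1 : ℝ) / 2) * nd (s / 2) t = Real.exp (-t ^ 2 / s) := by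
    rw [nd, ← mul_assoc, show 2 * π * (s / 2) = π * s by ring, ← Real.rpow_add (by positivity),
      mul_div_cancel₀ s two_ne_zero]
    norm_num
  have hprod : (τ * (2 * π * s)) ^ ((Fintype.card ι : ℝ) / 2) * ∏ j, nd (τ * s) (β j) =
      Real.exp (-(β ⬝ᵥ β) / (2 * (τ * s))) := by
    rw [prod_nd (by positivity), ← mul_assoc, show 2 * π * (τ * s) = τ * (2 * π * s) by ring,
      ← Real.rpow_add (by positivity), ← add_div, add_neg_cancel, zero_div, Real.rpow_zero,
      one_mul]
    simp only [dotProduct, sq]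
  rw [hnd, hprod, ← Real.exp_add, ← Real.exp_add]
  congr 1
  field_simp
  ring

lemma exists_posteriorKernel_le {y : ι → ℝ} (hy : ∃ i j, y i ≠ y j) (Z : Matrix ι (Fin p) ℝ)
    {V : Matrix (Fin p) (Fin p) ℝ} (hV : V.PosDef) :
    ∃ K ≥ 0, ∃ c > 0, ∃ τ > 0, ∃ μ : (Fin p → ℝ) → ℝ, ∀ s > 0, ∀ β α,
      posteriorKernel y Z V s β α ≤
        K * (s ^ (-(((Fintype.card ι : ℝ) - 1) / 2) - 1) * Real.exp (-c / s)) *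
          (∏ j, nd (τ * s) (β j)) * nd (s / 2) (α - μ β) := by
  obtain ⟨c, hc, τ, hτ, μ, hle⟩ := exists_le_residualSumOfSquares_add hy Z hV.inv
  have hdet := hV.det_pos
  set m : ℝ := (Fintype.card ι : ℝ)
  refine ⟨V.det ^ (-(1 : ℝ) / 2) * (2 * π) ^ (-m / 2) * π ^ ((1 : ℝ) / 2) * τ ^ ((p : ℝ) / 2),
    by positivity, c, hc, τ, hτ, μ, fun s hs β α => ?_⟩
  have hpow : s ^ (-((m - 1) / 2) - 1) = s ^ (-m / 2) * s⁻¹ * s ^ ((1 : ℝ) / 2) := by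
    rw [← Real.rpow_neg_one s, ← Real.rpow_add hs, ← Real.rpow_add hs]
    ring_nf
  have hcancel : (2 * π * s) ^ (-(p : ℝ) / 2) * (2 * π * s) ^ ((p : ℝ) / 2) = 1 := by
    rw [← Real.rpow_add (by positivity), ← add_div, neg_add_cancel, zero_div, Real.rpow_zero]
  calc posteriorKernel y Z V s β α
      ≤ V.det ^ (-(1 : ℝ) / 2) * (2 * π * s) ^ (-m / 2) * (2 * π * s) ^ (-(p : ℝ) / 2) * s⁻¹ *
          Real.exp (-(2 * c + 2 * (α - μ β) ^ 2 + (β ⬝ᵥ β) / τ) / (2 * s)) := by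
        rw [posteriorKernel_eq y Z hV hs]
        gcongr _ * Real.exp (-?_ / (2 * s))
        exact hle β α
    _ = V.det ^ (-(1 : ℝ) / 2) * (2 * π) ^ (-m / 2) * π ^ ((1 : ℝ) / 2) * τ ^ ((p : ℝ) / 2) *
          (s ^ (-m / 2) * s⁻¹ * s ^ ((1 : ℝ) / 2) * Real.exp (-c / s)) *
          (∏ j, nd (τ * s) (β j)) * nd (s / 2) (α - μ β) *
          ((2 * π * s) ^ (-(p : ℝ) / 2) * (2 * π * s) ^ ((p : ℝ) / 2)) := by
        rw [exp_eq_mul_nd_mul_prod_nd hs hτ, Fintype.card_fin, Real.mul_rpow (by positivity) hs.le,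
          Real.mul_rpow pi_pos.le hs.le, Real.mul_rpow hτ.le (by positivity)]
        ring
    _ = _ := by rw [hcancel, hpow, mul_one]

lemma lintegral_lintegral_le_of_le_mul_prod_nd_mul_nd {u v H : ℝ} (hu : 0 < u) (hv : 0 < v)
    (hH : 0 ≤ H) {μ : (ι → ℝ) → ℝ} {f : (ι → ℝ) → ℝ → ℝ}
    (hf : ∀ β α, f β α ≤ H * (∏ j, nd v (β j)) * nd u (α - μ β)) :
    ∫⁻ β, ∫⁻ α, ENNReal.ofReal (f β α) ≤ ENNReal.ofReal H := by
  have hprod (β : ι → ℝ) : 0 ≤ ∏ j, nd v (β j) := Finset.prod_nonneg fun _ _ => nd_nonneg hv.le _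
  have hα (β : ι → ℝ) :
      ∫⁻ α, ENNReal.ofReal (f β α) ≤ ENNReal.ofReal H * ENNReal.ofReal (∏ j, nd v (β j)) :=
    calc ∫⁻ α, ENNReal.ofReal (f β α)
        ≤ ∫⁻ α, ENNReal.ofReal (H * ∏ j, nd v (β j)) * ENNReal.ofReal (nd u (α - μ β)) :=
          lintegral_mono fun α => by
            rw [← ENNReal.ofReal_mul (mul_nonneg hH (hprod β))]
            exact ENNReal.ofReal_le_ofReal (hf β α)
      _ = ENNReal.ofReal H * ENNReal.ofReal (∏ j, nd v (β j)) := by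
          rw [lintegral_const_mul' _ _ ENNReal.ofReal_ne_top, lintegral_nd_sub hu, mul_one,
            ENNReal.ofReal_mul hH]
  have hβ : ∫⁻ β : ι → ℝ, ENNReal.ofReal (∏ j, nd v (β j)) = 1 := by
    simpa only [Pi.zero_apply, sub_zero] using lintegral_prod_nd_sub hv (0 : ι → ℝ)
  refine (lintegral_mono hα).trans_eq ?_
  rw [lintegral_const_mul' _ _ ENNReal.ofReal_ne_top, hβ, mul_one]

end Regression

theorem lintegral_posteriorKernel_lt_top {ι : Type*} [Fintype ι] {p : ℕ} {y : ι → ℝ}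
    (hy : ∃ i j, y i ≠ y j) (Z : Matrix ι (Fin p) ℝ) {V : Matrix (Fin p) (Fin p) ℝ}
    (hV : V.PosDef) :
    ∫⁻ s in Set.Ioi (0 : ℝ), ∫⁻ β, ∫⁻ α, ENNReal.ofReal (posteriorKernel y Z V s β α) < ⊤ := by
  obtain ⟨K, hK, c, hc, τ, hτ, μ, hle⟩ := exists_posteriorKernel_le hy Z hV
  have hcard : (1 : ℝ) < Fintype.card ι := by
    obtain ⟨i, j, hij⟩ := hy
    exact_mod_cast Fintype.one_lt_card_iff.2 ⟨i, j, ne_of_apply_ne y hij⟩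
  refine (setLIntegral_mono' measurableSet_Ioi fun s (hs : 0 < s) => ?_).trans_lt
    ((integrableOn_rpow_mul_exp_neg_div (half_pos (sub_pos.2 hcard)) hc).const_mul
      K).lintegral_lt_top
  exact lintegral_lintegral_le_of_le_mul_prod_nd_mul_nd (half_pos hs) (mul_pos hτ hs)
    (by positivity) (hle s hs)

/-- The g-prior is the case `V = g (XᵀX)⁻¹`. The rows of `Z` and `W` are the covariates of the
uncensored and the censored observations, and left censoring takes for `S` an orthant. -/
theorem tobit_posterior_exists_general {ι κ : Type*} [Fintype ι] [Fintype κ] {p : ℕ} {y : ι → ℝ}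
    (hy : ∃ i j, y i ≠ y j) (Z : Matrix ι (Fin p) ℝ) (W : Matrix κ (Fin p) ℝ) (S : Set (κ → ℝ))
    {V : Matrix (Fin p) (Fin p) ℝ} (hV : V.PosDef) :
    (∫⁻ s in Set.Ioi (0 : ℝ), ∫⁻ β : Fin p → ℝ, ∫⁻ α : ℝ, ∫⁻ z in S,
      ENNReal.ofReal
        ((∏ i, nd s (y i - α - (Z *ᵥ β) i)) * (∏ k, nd s (z k - α - (W *ᵥ β) k)) *
          gaussPdf 0 (s • V) β * s⁻¹)) < ⊤ := by
  refine lt_of_le_of_lt (setLIntegral_mono' measurableSet_Ioi fun s (hs : 0 < s) =>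
    lintegral_mono fun β => lintegral_mono fun α => ?_) (lintegral_posteriorKernel_lt_top hy Z hV)
  calc _ = ∫⁻ z in S, ENNReal.ofReal
          (posteriorKernel y Z V s β α * ∏ k, nd s (z k - (α + (W *ᵥ β) k))) := by
        simp only [posteriorKernel, sub_sub]
        refine lintegral_congr fun z => congrArg ENNReal.ofReal ?_
        ring
    _ ≤ ENNReal.ofReal (posteriorKernel y Z V s β α) :=
        setLIntegral_mul_prod_nd_sub_le hs S _ (posteriorKernel_nonneg y Z hV hs β α)

/-- Posterior existence for the left-censored Tobit type I regression model under
the improper prior `p(α, σ²) ∝ σ⁻²` and the g-prior on `β`: if there are at least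
two uncensored observations and the uncensored values are not all equal, the
marginal likelihood is finite. -/
theorem tobit_posterior_exists (n p : ℕ) (yL : ℝ) (y : Fin n → ℝ)
    (hy : ∀ i, yL ≤ y i)
    (X : Matrix (Fin n) (Fin p) ℝ)
    (hcent : Xᵀ *ᵥ (fun _ => (1 : ℝ)) = 0)
    (hrank : (Matrix.of fun i => Fin.cons (1 : ℝ) (fun j => X i j)
        : Matrix (Fin n) (Fin (p + 1)) ℝ).rank = p + 1)
    (g : ℝ) (hg : 0 < g)
    (hN : 2 ≤ Fintype.card {i // yL < y i})
    (hne : ∃ i j : {i // yL < y i}, y i.1 ≠ y j.1) :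
    (∫⁻ s in Set.Ioi (0 : ℝ), ∫⁻ β : Fin p → ℝ, ∫⁻ α : ℝ,
        ∫⁻ zc in (Set.univ.pi fun _ : {i // y i = yL} => Set.Iic yL),
          ENNReal.ofReal
            ((∏ i : {i // yL < y i}, nd s (y i.1 - α - (X *ᵥ β) i.1)) *
              (∏ i : {i // y i = yL}, nd s (zc i - α - (X *ᵥ β) i.1)) *
              gaussPdf (0 : Fin p → ℝ) ((g * s) • (Xᵀ * X)⁻¹) β * s⁻¹)) < ⊤ := by
  have hV : (g • (Xᵀ * X)⁻¹).PosDef := (posDef_transpose_mul_self_of_rank_cons hrank).inv.smul hg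
  refine lt_of_eq_of_lt (lintegral_congr fun s => ?_)
    (tobit_posterior_exists_general hne (X.submatrix (↑) id) (X.submatrix (↑) id)
      (Set.univ.pi fun _ : {i // y i = yL} => Set.Iic yL) hV)
  rw [mul_comm g, mul_smul]
  rfl
end
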